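/- arXiv:1009.0679 — 8 statements merged into one kernel-verified Lean document; each statement's English description precedes it below -/
import Mathlib

section
/- Let D > 0 and a, b ∈ ℝ, and write x₊ := max(x, 0). Then the supremum, over all Borel probability measures ν on ℝ that are supported in some closed interval of length at most D and satisfy ∫ y dν(y) = b, of ν({y : y ≥ a}) equals p_max := (1 − (a − b)₊/D)₊; moreover the supremum is attained by the measure p_max·δ_a + (1 − p_max)·δ_{a−D}. -/
open MeasureTheory
open scoped ENNReal

/-!
Upper bound: if `ν` charges `{y | a ≤ y}`, a support interval `[l, u]` of length at most `D` has
`a ≤ u`, hence `a - D ≤ l`, and so `a - D + D * 1_{a ≤ y} ≤ y` for `ν`-almost every `y`. Integrating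
gives `a - D + D * ν {y | a ≤ y} ≤ b`, which together with `ν {y | a ≤ y} ≤ 1` is the bound.

Attainment: for `a ≤ b` or `D ≤ a - b` the Dirac mass at `b` attains the bound; for
`0 < a - b < D` the mixture of `δ_a` and `δ_(a - D)` with weight `1 - (a - b) / D` on `δ_a` has
mean `b` and attains it.
-/

/-- Integrated form of the pointwise bound `a - D + D * 1_{a ≤ y} ≤ y`. -/
theorem mass_le_of_support {D a : ℝ} (ν : Measure ℝ) [IsProbabilityMeasure ν]
    {l u : ℝ} (hlu : u - l ≤ D) (hs : ν (Set.Icc l u) = 1) (h0 : ν {y | a ≤ y} ≠ 0) :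
    a - D + D * ν.real {y | a ≤ y} ≤ ∫ y, y ∂ν := by
  have hae : ∀ᵐ y ∂ν, y ∈ Set.Icc l u := (mem_ae_iff_prob_eq_one measurableSet_Icc).2 hs
  have hau : a ≤ u := by
    by_contra h
    apply h0
    rw [← compl_compl {y : ℝ | a ≤ y}, ← mem_ae_iff]
    filter_upwards [hae] with y hy hay
    exact h (le_trans hay hy.2)
  have hint : Integrable (fun y : ℝ => y) ν := by
    refine Integrable.of_bound (by fun_prop) (max |l| |u|) ?_
    filter_upwards [hae] with y hy
    exact abs_le_max_abs_abs hy.1 hy.2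
  have hS : MeasurableSet {y : ℝ | a ≤ y} := measurableSet_Ici
  have hind : Integrable ({y : ℝ | a ≤ y}.indicator fun _ => D) ν :=
    (integrable_const D).indicator hS
  calc a - D + D * ν.real {y | a ≤ y}
      = ∫ y, (a - D) + {y : ℝ | a ≤ y}.indicator (fun _ => D) y ∂ν := by
        rw [integral_add (integrable_const _) hind, integral_indicator_const _ hS]
        simp [mul_comm]
    _ ≤ ∫ y, y ∂ν := by
        refine integral_mono_ae ((integrable_const _).add hind) hint ?_
        filter_upwards [hae] with y hy
        by_cases hay : a ≤ y
        · simp [hay]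
        · simp only [Set.indicator, Set.mem_ofPred_eq, hay, if_false]
          linarith [hy.1]

/-- **Optimal bound for the admissible set `A₁`** (mean `b`, range of diameter at most `D`).
The supremum over Borel probability measures `ν` on `ℝ`, supported in some closed
interval of length at most `D` and with mean `b`, of `ν {y : y ≥ a}` equals
`p_max := (1 − (a − b)₊ / D)₊`; the supremum is attained, and the measure
`p_max • δ_a + (1 − p_max) • δ_{a − D}` assigns exactly the mass `p_max`
to `{y : y ≥ a}`. -/
theorem stmt2 (D a b : ℝ) (hD : 0 < D) :
    IsGreatest
      {p : ℝ≥0∞ | ∃ ν : Measure ℝ, IsProbabilityMeasure ν ∧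
        (∃ l u : ℝ, u - l ≤ D ∧ ν (Set.Icc l u) = 1) ∧
        (∫ y, y ∂ν) = b ∧ p = ν {y | a ≤ y}}
      (ENNReal.ofReal (max (1 - max (a - b) 0 / D) 0)) ∧
    (ENNReal.ofReal (max (1 - max (a - b) 0 / D) 0) • Measure.dirac a +
        (1 - ENNReal.ofReal (max (1 - max (a - b) 0 / D) 0)) • Measure.dirac (a - D))
      {y | a ≤ y} = ENNReal.ofReal (max (1 - max (a - b) 0 / D) 0) := by
  set p : ℝ := max (1 - max (a - b) 0 / D) 0 with hp
  have hp0 : 0 ≤ p := le_max_right _ _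
  have hnot : ¬ a ≤ a - D := by linarith
  have hS : MeasurableSet {y : ℝ | a ≤ y} := measurableSet_Ici
  have hmass : (ENNReal.ofReal p • Measure.dirac a +
      (1 - ENNReal.ofReal p) • Measure.dirac (a - D)) {y | a ≤ y} = ENNReal.ofReal p := by
    simp [Measure.dirac_apply' _ hS, hD]
  refine ⟨⟨?_, ?_⟩, hmass⟩
  · have hdirac : ∀ q : ℝ≥0∞, q = Measure.dirac b {y | a ≤ y} →
        ∃ ν : Measure ℝ, IsProbabilityMeasure ν ∧
        (∃ l u : ℝ, u - l ≤ D ∧ ν (Set.Icc l u) = 1) ∧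
        (∫ y, y ∂ν) = b ∧ q = ν {y | a ≤ y} := fun q hq =>
      ⟨Measure.dirac b, inferInstance, ⟨b, b, by simpa using hD.le, by simp⟩, by simp, hq⟩
    rcases le_or_gt a b with hab | hab
    · apply hdirac
      have : p = 1 := by simp [hp, max_eq_right (sub_nonpos.2 hab)]
      simp [this, Measure.dirac_apply' _ hS, hab]
    have hpos : 0 ≤ a - b := (sub_pos.2 hab).le
    rcases le_or_gt D (a - b) with hDab | hDab
    · apply hdirac
      have : p = 0 := by
        rw [hp, max_eq_left hpos]
        exact max_eq_right (sub_nonpos.2 ((one_le_div hD).2 hDab))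
      simp [this, Measure.dirac_apply' _ hS, hab]
    have hpe : p = 1 - (a - b) / D := by
      rw [hp, max_eq_left hpos]
      exact max_eq_left (sub_nonneg.2 ((div_le_one hD).2 hDab.le))
    have hp1 : p ≤ 1 := by rw [hpe]; linarith [div_nonneg hpos hD.le]
    have hle : ENNReal.ofReal p ≤ 1 := ENNReal.ofReal_le_one.2 hp1
    refine ⟨_, ⟨?_⟩, ⟨a - D, a, by linarith, ?_⟩, ?_, hmass.symm⟩
    · simp [add_tsub_cancel_of_le hle]
    · simp [Measure.dirac_apply' _ measurableSet_Icc, hD.le, add_tsub_cancel_of_le hle]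
    · have hi : ∀ x : ℝ, Integrable (fun y : ℝ => y) (Measure.dirac x) := fun x =>
        integrable_dirac (by simp)
      rw [integral_add_measure ((hi _).smul_measure ENNReal.ofReal_ne_top)
        ((hi _).smul_measure (ENNReal.sub_ne_top ENNReal.one_ne_top)),
        integral_smul_measure, integral_smul_measure, integral_dirac, integral_dirac,
        ENNReal.toReal_sub_of_le hle ENNReal.one_ne_top, ENNReal.toReal_ofReal hp0, hpe]
      simp only [ENNReal.toReal_one, smul_eq_mul]
      field_simp
      ring
  · rintro _ ⟨ν, hν, ⟨l, u, hlu, hs⟩, hmean, rfl⟩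
    by_cases h0 : ν {y | a ≤ y} = 0
    · simp [h0]
    have hb := mass_le_of_support ν hlu hs h0
    rw [hmean] at hb
    have h1 : ν.real {y | a ≤ y} ≤ 1 := measureReal_le_one
    rw [← ofReal_measureReal]
    refine ENNReal.ofReal_le_ofReal (le_max_of_le_left ?_)
    rw [le_sub_comm, div_le_iff₀ hD]
    exact max_le (by linarith) (mul_nonneg (sub_nonneg.2 h1) hD.le)
end

section
/- Let X₁, …, X_m be nonempty Polish spaces with their Borel σ-algebras and let X = X₁ × ⋯ × X_m carry the product σ-algebra. Let n' ∈ ℕ and, for each i, n_i ∈ ℕ; let g'_j : X → ℝ (j = 1, …, n') and g^i_j : X_i → ℝ (j = 1, …, n_i; i = 1, …, m) be measurable. Let M^G be the set of product probability measures μ = μ₁ ⊗ ⋯ ⊗ μ_m on X under which every g'_j is integrable with ∫ g'_j dμ ≤ 0 and every g^i_j is μ_i-integrable with ∫ g^i_j dμ_i ≤ 0. Let r : X → [0, +∞] be measurable, and let M_Δ := { μ ∈ M^G : for each i, μ_i is a convex combination of at most n' + n_i + 1 Dirac masses on X_i }. Then sup_{μ ∈ M^G} ∫ r dμ = sup_{μ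 ∈ M_Δ} ∫ r dμ. -/
/-!
Fix an admissible family `μ` and `c < ∫⁻ r ∂(⊗ μ)`. If all marginals but the `i`-th are frozen, Fubini
turns the objective and the `n' + n i` relevant constraints into integrals against the `i`-th marginal
alone, so it is enough to discretize one marginal at a time (`exists_update`) and to let `c` increase
to the objective at the end.

For a single probability measure (`exists_diracComb`), truncate the objective to a bounded `q` whose
integral still exceeds `c`. The vector of the `k` moments together with `∫ q` is the mean of an
integrable map into a finite-dimensional space, hence lies in the convex hull of the values of that map
on any conull set (`zero_mem_convexHull_of_integral_eq_zero`); no closure is needed because a mean on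
the boundary forces the map into a supporting hyperplane. This gives a finitely supported measure with
the right moments. A linear-programming version of Carathéodory's theorem (`exists_reduce_support`)
then lowers the number of atoms to `k + 1` (the `k` moments and the total mass) without decreasing the
integral of `q`. The conull set is used to select atoms at which the sections of the
global constraints are integrable.
-/

open MeasureTheory
open scoped ENNReal

/-- `DiracComb k ν` : the measure `ν` is a convex combination of at most `k + 1`
Dirac masses. -/
def DiracComb {Z : Type*} [MeasurableSpace Z] (k : ℕ) (ν : Measure Z) : Prop :=
  ∃ (w : Fin (k + 1) → ℝ≥0∞) (z : Fin (k + 1) → Z),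
    (∑ j, w j) = 1 ∧ ν = ∑ j, w j • Measure.dirac (z j)

/-! ### Means lie in the convex hull -/

/-- If `0` is the mean of `f` but not in the convex hull of its values on a conull set, then `f` lies
almost surely in a hyperplane through `0`. The hyperplane is a supporting one if the hull has interior
points, and otherwise comes from a proper affine subspace containing the hull. -/
lemma exists_dual_ae_eq_zero {V : Type*} [NormedAddCommGroup V] [NormedSpace ℝ V]
    [FiniteDimensional ℝ V] {Z : Type*} [MeasurableSpace Z] (μ : Measure Z)
    [IsProbabilityMeasure μ] (f : Z → V) (hf : Integrable f μ) (h0 : ∫ z, f z ∂μ = 0)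
    (A : Set Z) (hA : ∀ᵐ z ∂μ, z ∈ A) (hC : (0 : V) ∉ convexHull ℝ (f '' A)) :
    ∃ φ : V →L[ℝ] ℝ, φ ≠ 0 ∧ ∀ᵐ z ∂μ, φ (f z) = 0 := by
  have hint : ∀ φ : V →L[ℝ] ℝ, ∫ z, φ (f z) ∂μ = 0 := fun φ => by
    rw [φ.integral_comp_comm hf, h0, map_zero]
  have hne : A.Nonempty := hA.exists
  have hconv : Convex ℝ (convexHull ℝ (f '' A)) := convex_convexHull ℝ _
  by_cases hi : (interior (convexHull ℝ (f '' A))).Nonempty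
  · obtain ⟨φ, hφ⟩ := geometric_hahn_banach_open_point hconv.interior isOpen_interior
      (fun h => hC (interior_subset h))
    rw [map_zero] at hφ
    refine ⟨φ, ?_, ?_⟩
    · rintro rfl
      obtain ⟨x, hx⟩ := hi
      simpa using hφ x hx
    · have hle : ∀ x ∈ convexHull ℝ (f '' A), φ x ≤ 0 := by
        intro x hx
        have hx' : x ∈ closure (interior (convexHull ℝ (f '' A))) := by
          rw [hconv.closure_interior_eq_closure_of_nonempty_interior hi]
          exact subset_closure hx
        exact closure_minimal (fun y hy => (hφ y hy).le)
          (isClosed_le φ.continuous continuous_const) hx'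
      have h1 : 0 ≤ᵐ[μ] fun z => -φ (f z) := by
        filter_upwards [hA] with z hz
        have := hle _ (subset_convexHull ℝ _ ⟨z, hz, rfl⟩)
        simpa using this
      have h2 := (integral_eq_zero_iff_of_nonneg_ae h1 (φ.integrable_comp hf).neg).1
        (by rw [integral_neg, hint, neg_zero])
      filter_upwards [h2] with z hz
      simpa using hz
  · rw [interior_convexHull_nonempty_iff_affineSpan_eq_top] at hi
    have hdir : (affineSpan ℝ (f '' A)).direction ≠ ⊤ := fun h => hi
      ((AffineSubspace.direction_eq_top_iff_of_nonempty
        ((hne.image f).mono (subset_affineSpan ℝ _))).1 h)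
    obtain ⟨φ, hφ0, hφ⟩ := Submodule.exists_le_ker_of_lt_top _ (lt_top_iff_ne_top.2 hdir)
    obtain ⟨a, ha⟩ := hne
    have hc : ∀ z ∈ A, φ (f z) = φ (f a) := by
      intro z hz
      have h := hφ (AffineSubspace.vsub_mem_direction
        (subset_affineSpan ℝ _ ⟨z, hz, rfl⟩) (subset_affineSpan ℝ _ ⟨a, ha, rfl⟩))
      rw [LinearMap.mem_ker, vsub_eq_sub, map_sub, sub_eq_zero] at h
      exact h
    have hae : ∀ᵐ z ∂μ, φ (f z) = φ (f a) := by
      filter_upwards [hA] with z hz using hc z hz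
    have hzero : φ (f a) = 0 := by
      have h := hint (LinearMap.toContinuousLinearMap φ)
      simp only [LinearMap.coe_toContinuousLinearMap'] at h
      rw [integral_congr_ae hae] at h
      simpa using h
    refine ⟨LinearMap.toContinuousLinearMap φ, by simpa using hφ0, ?_⟩
    filter_upwards [hae] with z hz
    simpa [hzero] using hz

/-- In finite dimension the mean of a centred `f` lies in the convex hull itself (not just its closure)
of the values on any conull set; by induction on the dimension, passing to the hyperplane given by
`exists_dual_ae_eq_zero`. -/
lemma zero_mem_convexHull_of_integral_eq_zero (d : ℕ) {V : Type*} [NormedAddCommGroup V]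
    [NormedSpace ℝ V] [FiniteDimensional ℝ V] (hd : Module.finrank ℝ V = d)
    {Z : Type*} [MeasurableSpace Z] (μ : Measure Z)
    [IsProbabilityMeasure μ] (f : Z → V) (hf : Integrable f μ) (h0 : ∫ z, f z ∂μ = 0)
    (A : Set Z) (hA : ∀ᵐ z ∂μ, z ∈ A) : (0 : V) ∈ convexHull ℝ (f '' A) := by
  induction d using Nat.strong_induction_on generalizing V A with
  | _ d ih =>
    by_contra hC
    obtain ⟨φ, hφ0, hφ⟩ := exists_dual_ae_eq_zero μ f hf h0 A hA hC
    let K : Submodule ℝ V := φ.toLinearMap.ker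
    have hK : K ≠ ⊤ := fun h => hφ0 (by
      ext x
      have : x ∈ K := h ▸ Submodule.mem_top
      simpa using LinearMap.mem_ker.1 this)
    -- Composing with a projection onto the hyperplane makes `f` take values in it everywhere.
    obtain ⟨P, hP⟩ := K.subtype.exists_leftInverse_of_injective K.ker_subtype
    let P' : V →L[ℝ] K := LinearMap.toContinuousLinearMap P
    have hPx : ∀ x ∈ K, ((P' x : K) : V) = x := fun x hx => by
      have := LinearMap.congr_fun hP ⟨x, hx⟩
      simpa [P'] using congrArg Subtype.val this
    have key := ih (Module.finrank ℝ K) (hd ▸ Submodule.finrank_lt hK) (V := K) rfl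
      (fun z => P' (f z)) (P'.integrable_comp hf)
      (by rw [P'.integral_comp_comm hf, h0, map_zero])
      (A ∩ {z | φ (f z) = 0}) (by filter_upwards [hA, hφ] with z h1 h2 using ⟨h1, h2⟩)
    have h1 := Set.mem_image_of_mem K.subtype key
    rw [LinearMap.image_convexHull, map_zero, Set.image_image] at h1
    refine hC (convexHull_mono ?_ h1)
    rintro _ ⟨z, ⟨hz, hz0⟩, rfl⟩
    exact ⟨z, hz, (hPx _ (LinearMap.mem_ker.2 hz0)).symm⟩

lemma exists_finset_sum_eq_integral {V : Type*} [NormedAddCommGroup V]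
    [NormedSpace ℝ V] [FiniteDimensional ℝ V]
    {Z : Type*} [MeasurableSpace Z] (μ : Measure Z)
    [IsProbabilityMeasure μ] (f : Z → V) (hf : Integrable f μ)
    (A : Set Z) (hA : ∀ᵐ z ∂μ, z ∈ A) :
    ∃ (ι : Type) (t : Finset ι) (w : ι → ℝ) (z : ι → Z), (∀ i ∈ t, 0 ≤ w i) ∧
      ∑ i ∈ t, w i = 1 ∧ (∀ i ∈ t, z i ∈ A) ∧ ∑ i ∈ t, w i • f (z i) = ∫ x, f x ∂μ := by
  set c := ∫ x, f x ∂μ with hc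
  have h := zero_mem_convexHull_of_integral_eq_zero _ rfl μ (fun z => f z - c)
    (hf.sub (integrable_const c)) (by rw [integral_sub hf (integrable_const c)]; simp [hc]) A hA
  rw [convexHull_eq] at h
  obtain ⟨ι, t, w, y, hw, hw1, hy, hsum⟩ := h
  have : ∃ z : ι → Z, ∀ i ∈ t, z i ∈ A ∧ f (z i) - c = y i := by
    have : Nonempty Z := hA.exists.nonempty
    choose! z hz using fun i (hi : i ∈ t) => hy i hi
    exact ⟨z, hz⟩
  obtain ⟨z, hz⟩ := this
  refine ⟨ι, t, w, z, hw, hw1, fun i hi => (hz i hi).1, ?_⟩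
  rw [Finset.centerMass_eq_of_sum_1 _ _ hw1] at hsum
  have h2 : ∑ i ∈ t, w i • (f (z i) - c) = 0 := by
    rw [← hsum]
    exact Finset.sum_congr rfl fun i hi => by rw [(hz i hi).2]
  simp only [smul_sub, Finset.sum_sub_distrib, ← Finset.sum_smul, hw1, one_smul] at h2
  exact sub_eq_zero.1 h2

/-! ### Carathéodory reduction with an objective -/

/-- Carathéodory's reduction with an objective: a conic combination of the `v i` can be rewritten with at
most `dim V` terms without decreasing `∑ w i * q i`. Since all `v i` lie on the hyperplane `l = 1`, a
linear relation between them has coefficients of both signs, so after choosing the sign for which the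
objective does not decrease, moving along it still ends at a vanishing weight. -/
lemma exists_reduce_support {ι V : Type*} [AddCommGroup V] [Module ℝ V] [FiniteDimensional ℝ V]
    (v : ι → V) (l : V →ₗ[ℝ] ℝ) (hl : ∀ i, l (v i) = 1) (q : ι → ℝ) (t : Finset ι) (w : ι → ℝ)
    (hw : ∀ i ∈ t, 0 ≤ w i) :
    ∃ (t' : Finset ι) (w' : ι → ℝ), t' ⊆ t ∧ t'.card ≤ Module.finrank ℝ V ∧
      (∀ i ∈ t', 0 ≤ w' i) ∧ ∑ i ∈ t', w' i • v i = ∑ i ∈ t, w i • v i ∧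
      ∑ i ∈ t, w i * q i ≤ ∑ i ∈ t', w' i * q i := by
  classical
  induction t using Finset.strongInduction generalizing w with
  | _ t ih =>
    by_cases hcard : t.card ≤ Module.finrank ℝ V
    · exact ⟨t, w, subset_rfl, hcard, hw, rfl, le_rfl⟩
    have hdep : ¬ LinearIndependent ℝ (fun i : t => v i) := fun h => hcard (by
      simpa using h.fintype_card_le_finrank)
    have hex : ∃ a : ι → ℝ, ∑ i ∈ t, a i • v i = 0 ∧ (∃ i ∈ t, a i ≠ 0) ∧
        0 ≤ ∑ i ∈ t, a i * q i := by
      obtain ⟨b, hb, ⟨i, hi⟩, hbi⟩ := Fintype.not_linearIndependent_iff.1 hdep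
      let a : ι → ℝ := fun i => if h : i ∈ t then b ⟨i, h⟩ else 0
      have hab : ∀ i : t, a i = b i := fun i => by simp [a]
      have ha : ∑ i ∈ t, a i • v i = 0 := by
        rw [← Finset.sum_coe_sort, ← hb]
        exact Finset.sum_congr rfl fun i _ => by rw [hab]
      have hai : a i ≠ 0 := by rw [hab ⟨i, hi⟩]; exact hbi
      rcases le_total 0 (∑ i ∈ t, a i * q i) with h | h
      · exact ⟨a, ha, ⟨i, hi, hai⟩, h⟩
      · refine ⟨-a, by simp [ha], ⟨i, hi, by simpa using hai⟩, ?_⟩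
        simpa using h
    obtain ⟨a, ha, ⟨j, hj, haj⟩, haq⟩ := hex
    have hasum : ∑ i ∈ t, a i = 0 := by
      have := congrArg l ha
      simpa [map_sum, hl] using this
    obtain ⟨j', hj', haj'⟩ : ∃ i ∈ t, a i < 0 := by
      obtain ⟨i, hi, h⟩ := Finset.exists_pos_of_sum_zero_of_exists_nonzero (s := t) (fun i => -a i)
        (by simp [hasum]) ⟨j, hj, by simpa using haj⟩
      exact ⟨i, hi, by simpa using h⟩
    -- the largest step along `a` that keeps all weights nonnegative
    obtain ⟨i₀, hi₀, hmin⟩ := Finset.exists_min_image (t.filter fun i => a i < 0)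
      (fun i => w i / -a i) ⟨j', by simp [hj', haj']⟩
    rw [Finset.mem_filter] at hi₀
    obtain ⟨hi₀, hneg⟩ := hi₀
    set τ := w i₀ / -a i₀ with hτ
    have hτ0 : 0 ≤ τ := div_nonneg (hw _ hi₀) (by linarith)
    have hwi₀ : w i₀ + τ * a i₀ = 0 := by
      have hne : -a i₀ ≠ 0 := by linarith
      have := div_mul_cancel₀ (w i₀) hne
      rw [← hτ] at this
      linarith
    have hpos : ∀ i ∈ t, 0 ≤ w i + τ * a i := by
      intro i hi
      rcases lt_or_ge (a i) 0 with h | h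
      · have h1 := hmin i (by simp [hi, h])
        rw [le_div_iff₀ (by linarith)] at h1
        linarith
      · have := hw i hi
        positivity
    obtain ⟨t', w', ht', hc', hw', hv', hq'⟩ := ih (t.erase i₀) (Finset.erase_ssubset hi₀)
      (fun i => w i + τ * a i) (fun i hi => hpos i (Finset.mem_of_mem_erase hi))
    refine ⟨t', w', ht'.trans (Finset.erase_subset _ _), hc', hw', ?_, ?_⟩
    · rw [hv', Finset.sum_erase _ (by rw [hwi₀, zero_smul])]
      simp only [add_smul, mul_smul, Finset.sum_add_distrib, ← Finset.smul_sum, ha, smul_zero,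
        add_zero]
    · refine le_trans ?_ hq'
      rw [Finset.sum_erase _ (by rw [hwi₀, zero_mul])]
      simp only [add_mul, mul_assoc, Finset.sum_add_distrib, ← Finset.mul_sum]
      nlinarith [mul_nonneg hτ0 haq]

/-! ### Discretizing one probability measure -/

lemma exists_truncation {Z : Type*} [MeasurableSpace Z] (μ : Measure Z)
    (R : Z → ℝ≥0∞) (hR : Measurable R) (c : ℝ≥0∞) (hc : c < ∫⁻ z, R z ∂μ) :
    ∃ N : ℕ, c < ∫⁻ z, min (R z) N ∂μ := by
  have h : ∀ z, R z = ⨆ N : ℕ, min (R z) (N : ℝ≥0∞) := fun z => by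
    have := inf_iSup_eq (R z) (fun N : ℕ => (N : ℝ≥0∞))
    rw [ENNReal.iSup_natCast, inf_top_eq] at this
    exact this
  rw [lintegral_congr h, lintegral_iSup (fun N => hR.min measurable_const)
    (fun a b hab z => min_le_min le_rfl (by exact_mod_cast hab)), lt_iSup_iff] at hc
  exact hc

/-- One-space version of the reduction: given finitely many moments, there is a combination of
`card κ + 1` Dirac masses at points of a prescribed conull set with the same moments and with
objective still above `c`. -/
lemma exists_diracComb {Z : Type*} [MeasurableSpace Z] (μ : Measure Z) [IsProbabilityMeasure μ]
    {κ : Type*} [Fintype κ] (f : κ → Z → ℝ) (hf : ∀ k, Integrable (f k) μ)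
    (R : Z → ℝ≥0∞) (hR : Measurable R) (c : ℝ≥0∞) (hc : c < ∫⁻ z, R z ∂μ)
    (A : Set Z) (hA : ∀ᵐ z ∂μ, z ∈ A) :
    ∃ (w : Fin (Fintype.card κ + 1) → ℝ≥0∞) (z : Fin (Fintype.card κ + 1) → Z),
      ∑ j, w j = 1 ∧ (∀ j, z j ∈ A) ∧
      (∀ k, ∑ j, (w j).toReal * f k (z j) = ∫ x, f k x ∂μ) ∧ c < ∑ j, w j * R (z j) := by
  classical
  obtain ⟨N, hN⟩ := exists_truncation μ R hR c hc
  obtain ⟨a₀, ha₀⟩ := hA.exists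
  have hfin : ∀ z, min (R z) (N : ℝ≥0∞) ≠ ∞ := fun z =>
    ne_top_of_le_ne_top (ENNReal.natCast_ne_top N) (min_le_right _ _)
  let q : Z → ℝ := fun z => (min (R z) (N : ℝ≥0∞)).toReal
  have hmeas : Measurable fun z => min (R z) (N : ℝ≥0∞) := hR.min measurable_const
  have hlint : ∫⁻ z, min (R z) (N : ℝ≥0∞) ∂μ ≠ ∞ := by
    refine ne_top_of_le_ne_top (ENNReal.natCast_ne_top N)
      ((lintegral_mono fun z => min_le_right _ _).trans ?_)
    simp
  have hq : Integrable q μ := integrable_toReal_of_lintegral_ne_top hmeas.aemeasurable hlint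
  have hqint : ENNReal.ofReal (∫ z, q z ∂μ) = ∫⁻ z, min (R z) (N : ℝ≥0∞) ∂μ := by
    rw [integral_toReal hmeas.aemeasurable (by filter_upwards with z using (hfin z).lt_top),
      ENNReal.ofReal_toReal hlint]
  -- the moment vector of a point, with the objective as last coordinate
  let F : Z → (κ → ℝ) × ℝ := fun z => (fun k => f k z, q z)
  have hF1 : Integrable (fun z => fun k => f k z) μ := Integrable.of_eval hf
  have hF : Integrable F μ := hF1.prodMk hq
  obtain ⟨ι, t, w, z, hw, hw1, hzA, hsum⟩ := exists_finset_sum_eq_integral μ F hF A hA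
  have hsum1 : ∀ k, ∑ i ∈ t, w i * f k (z i) = ∫ x, f k x ∂μ := by
    intro k
    have h1 := congrArg Prod.fst hsum
    rw [fst_integral hF] at h1
    have h2 := congrFun h1 k
    rw [eval_integral hf] at h2
    rw [← h2]
    simp [F, Prod.fst_sum]
  have hsum2 : ∑ i ∈ t, w i * q (z i) = ∫ x, q x ∂μ := by
    have h1 := congrArg Prod.snd hsum
    rw [snd_integral hF] at h1
    rw [← h1]
    simp [F, Prod.snd_sum]
  obtain ⟨t', w', ht', hcard, hw', hv, hle⟩ := exists_reduce_support (V := (κ → ℝ) × ℝ)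
    (fun i => ((fun k => f k (z i)), 1)) (LinearMap.snd ℝ _ _) (fun _ => rfl)
    (fun i => q (z i)) t w hw
  have hv1 : ∀ k, ∑ i ∈ t', w' i * f k (z i) = ∫ x, f k x ∂μ := by
    intro k
    have h := congrFun (congrArg Prod.fst hv) k
    rw [← hsum1 k]
    simpa [Prod.fst_sum] using h
  have hv2 : ∑ i ∈ t', w' i = 1 := by
    have h := congrArg Prod.snd hv
    rw [← hw1]
    simpa [Prod.snd_sum] using h
  obtain ⟨e⟩ : Nonempty (t' ↪ Fin (Fintype.card κ + 1)) :=
    Function.Embedding.nonempty_of_card_le (by simpa using hcard)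
  -- enumerate the points, padding with zero weights
  let W : Fin (Fintype.card κ + 1) → ℝ≥0∞ :=
    Function.extend e (fun i => ENNReal.ofReal (w' i)) (fun _ => 0)
  let Y : Fin (Fintype.card κ + 1) → Z := Function.extend e (fun i => z i) (fun _ => a₀)
  have hWe : ∀ i, W (e i) = ENNReal.ofReal (w' i) := fun i => e.injective.extend_apply _ _ i
  have hYe : ∀ i, Y (e i) = z i := fun i => e.injective.extend_apply _ _ i
  have hW0 : ∀ j, j ∉ Set.range e → W j = 0 := fun j hj =>
    Function.extend_apply' _ _ _ hj
  have hpos : ∀ i : t', 0 ≤ w' i := fun i => hw' i i.2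
  refine ⟨W, Y, ?_, ?_, ?_, ?_⟩
  · rw [← Fintype.sum_of_injective e e.injective (fun i => ENNReal.ofReal (w' i)) W hW0
      (fun i => (hWe i).symm), ← ENNReal.ofReal_sum_of_nonneg (fun i _ => hpos i),
      Finset.sum_coe_sort t' w', hv2, ENNReal.ofReal_one]
  · intro j
    by_cases hj : j ∈ Set.range e
    · obtain ⟨i, rfl⟩ := hj
      rw [hYe]
      exact hzA _ (ht' i.2)
    · rw [show Y j = a₀ from Function.extend_apply' _ _ _ hj]
      exact ha₀
  · intro k
    rw [← Fintype.sum_of_injective e e.injective (fun i => w' i * f k (z i)) _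
      (fun j hj => by simp [hW0 j hj])
      (fun i => by rw [hWe, hYe, ENNReal.toReal_ofReal (hpos i)]),
      Finset.sum_coe_sort t' (fun i => w' i * f k (z i)), hv1]
  · rw [← Fintype.sum_of_injective e e.injective
      (fun i => ENNReal.ofReal (w' i) * R (z i)) (fun j => W j * R (Y j))
      (fun j hj => by simp [hW0 j hj]) (fun i => by rw [hWe, hYe])]
    calc c < ∫⁻ z, min (R z) (N : ℝ≥0∞) ∂μ := hN
      _ = ENNReal.ofReal (∫ z, q z ∂μ) := hqint.symm
      _ ≤ ENNReal.ofReal (∑ i ∈ t', w' i * q (z i)) := ENNReal.ofReal_le_ofReal (hsum2 ▸ hle)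
      _ = ∑ i : t', ENNReal.ofReal (w' i * q (z i)) := by
        rw [← Finset.sum_coe_sort t' (fun i => w' i * q (z i)), ENNReal.ofReal_sum_of_nonneg]
        exact fun i _ => mul_nonneg (hpos i) ENNReal.toReal_nonneg
      _ ≤ _ := Finset.sum_le_sum fun i _ => by
        rw [ENNReal.ofReal_mul (hpos i), ENNReal.ofReal_toReal (hfin _)]
        gcongr
        exact min_le_left _ _

/-! ### Replacing one marginal of a product measure -/

/-- Replacing the `i`-th coordinate of a `⊗ μ`-random point by an independent `ν`-random one replaces
the `i`-th marginal. This form of Fubini keeps the (resampled, hence irrelevant) `i`-th coordinate in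
the inner integral, which avoids splitting the dependent product. -/
lemma map_update_prod_pi {ι : Type*} [Fintype ι] [DecidableEq ι] {X : ι → Type*}
    [∀ i, MeasurableSpace (X i)] (μ : ∀ i, Measure (X i)) [∀ i, IsProbabilityMeasure (μ i)]
    (i : ι) (ν : Measure (X i)) [IsProbabilityMeasure ν] :
    (ν.prod (Measure.pi μ)).map (fun p => Function.update p.2 i p.1) =
      Measure.pi (Function.update μ i ν) := by
  have hprob : ∀ j, IsProbabilityMeasure (Function.update μ i ν j) := by
    intro j
    rcases eq_or_ne j i with rfl | h
    · simpa
    · simpa [h] using inferInstanceAs (IsProbabilityMeasure (μ j))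
  have hmeas : Measurable (fun p : X i × (∀ j, X j) => Function.update p.2 i p.1) :=
    measurable_update'.comp measurable_swap
  refine (Measure.pi_eq fun s hs => ?_).symm
  rw [Measure.map_apply hmeas (MeasurableSet.univ_pi hs)]
  have hpre : (fun p : X i × (∀ j, X j) => Function.update p.2 i p.1) ⁻¹' (Set.univ.pi s) =
      s i ×ˢ Set.univ.pi (Function.update s i Set.univ) := by
    ext p
    simp only [Set.mem_preimage, Set.mem_pi, Set.mem_univ, true_implies, Set.mem_prod]
    constructor
    · intro h
      refine ⟨by simpa using h i, fun j => ?_⟩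
      rcases eq_or_ne j i with rfl | hj
      · simp
      · simpa [hj] using h j
    · rintro ⟨h1, h2⟩ j
      rcases eq_or_ne j i with rfl | hj
      · simpa using h1
      · simpa [hj] using h2 j
  rw [hpre, Measure.prod_prod, Measure.pi_pi, ← Finset.mul_prod_erase _ _ (Finset.mem_univ i),
    ← Finset.mul_prod_erase _ (fun j => Function.update μ i ν j (s j)) (Finset.mem_univ i)]
  simp only [Function.update_self, measure_univ, one_mul]
  congr 1
  refine Finset.prod_congr rfl fun j hj => ?_
  have : j ≠ i := Finset.ne_of_mem_erase hj
  simp [this]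

/-- The family of marginals `μ` is admissible: it consists of probability measures, and satisfies the
global moment constraints `g'` (under the product measure) and the marginal constraints `g`,
integrability included. -/
def Admissible {m : ℕ} {X : Fin m → Type*} [∀ i, MeasurableSpace (X i)] {n' : ℕ} {n : Fin m → ℕ}
    (g' : Fin n' → ((∀ i, X i) → ℝ)) (g : ∀ i, Fin (n i) → (X i → ℝ))
    (μ : ∀ i, Measure (X i)) : Prop :=
  (∀ i, IsProbabilityMeasure (μ i)) ∧
  (∀ j, Integrable (g' j) (Measure.pi μ) ∧ (∫ x, g' j x ∂Measure.pi μ) ≤ 0) ∧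
  (∀ i j, Integrable (g i j) (μ i) ∧ (∫ x, g i j x ∂μ i) ≤ 0)

/-- One marginal of an admissible family can be replaced by a combination of `n' + n i + 1` Dirac
masses while the objective stays above `c`: once the other marginals are fixed, all constraints and
the objective are linear in the `i`-th marginal. -/
lemma exists_update {m : ℕ} {X : Fin m → Type*} [∀ i, MeasurableSpace (X i)]
    [∀ i, MeasurableSingletonClass (X i)] {n' : ℕ} {n : Fin m → ℕ}
    {g' : Fin n' → ((∀ i, X i) → ℝ)} (hg' : ∀ j, Measurable (g' j))
    {g : ∀ i, Fin (n i) → (X i → ℝ)}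
    {r : (∀ i, X i) → ℝ≥0∞} (hr : Measurable r) {μ : ∀ i, Measure (X i)}
    (hμ : Admissible g' g μ) {c : ℝ≥0∞} (hc : c < ∫⁻ x, r x ∂Measure.pi μ) (i : Fin m) :
    ∃ ν : Measure (X i), DiracComb (n' + n i) ν ∧ Admissible g' g (Function.update μ i ν) ∧
      c < ∫⁻ x, r x ∂Measure.pi (Function.update μ i ν) := by
  obtain ⟨hprob, hG', hG⟩ := hμ
  have hΦ : Measurable (fun p : X i × (∀ j, X j) => Function.update p.2 i p.1) :=
    measurable_update'.comp measurable_swap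
  have hself : (μ i |>.prod (Measure.pi μ)).map (fun p => Function.update p.2 i p.1) =
      Measure.pi μ := by rw [map_update_prod_pi, Function.update_eq_self]
  have hint : ∀ j, Integrable (fun p : X i × (∀ j, X j) => g' j (Function.update p.2 i p.1))
      ((μ i).prod (Measure.pi μ)) := fun j =>
    (integrable_map_measure (hg' j).aestronglyMeasurable hΦ.aemeasurable).1
      (hself.symm ▸ (hG' j).1)
  -- partial integrals over the other coordinates
  let f : Fin n' ⊕ Fin (n i) → X i → ℝ :=
    Sum.elim (fun j z => ∫ y, g' j (Function.update y i z) ∂Measure.pi μ) (g i)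
  let R : X i → ℝ≥0∞ := fun z => ∫⁻ y, r (Function.update y i z) ∂Measure.pi μ
  have hf : ∀ k, Integrable (f k) (μ i) := by
    rintro (j | j)
    · exact (hint j).integral_prod_left
    · exact (hG i j).1
  have hrΦ : Measurable (fun p : X i × (∀ j, X j) => r (Function.update p.2 i p.1)) := hr.comp hΦ
  have hR : Measurable R := hrΦ.lintegral_prod_right'
  have hlint : ∀ (ν : Measure (X i)) [IsProbabilityMeasure ν],
      ∫⁻ x, r x ∂Measure.pi (Function.update μ i ν) = ∫⁻ z, R z ∂ν := fun ν _ => by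
    rw [← map_update_prod_pi, lintegral_map hr hΦ, lintegral_prod _ hrΦ.aemeasurable]
  have hcR : c < ∫⁻ z, R z ∂μ i := by
    rwa [← hlint, Function.update_eq_self]
  obtain ⟨w, z, hw1, hzA, hfz, hcz⟩ := exists_diracComb (μ i) f hf R hR c hcR
    {z | ∀ j, Integrable (fun y => g' j (Function.update y i z)) (Measure.pi μ)}
    (by
      change ∀ᵐ z ∂μ i, ∀ j, Integrable (fun y => g' j (Function.update y i z)) (Measure.pi μ)
      exact ae_all_iff.2 fun j => (hint j).prod_right_ae)
  let ν : Measure (X i) := ∑ j, w j • Measure.dirac (z j)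
  have hwtop : ∀ j, w j ≠ ∞ := fun j => ne_top_of_le_ne_top ENNReal.one_ne_top
    (hw1 ▸ Finset.single_le_sum (fun _ _ => zero_le) (Finset.mem_univ j))
  have hν : IsProbabilityMeasure ν := ⟨by simp [ν, hw1]⟩
  have hνint : ∀ h : X i → ℝ, Integrable h ν := fun h =>
    integrable_finsetSum_measure.2 fun j _ =>
      (integrable_dirac (by simp)).smul_measure (hwtop j)
  have hνval : ∀ h : X i → ℝ, ∫ x, h x ∂ν = ∑ j, (w j).toReal * h (z j) := fun h => by
    rw [integral_finsetSum_measure fun j _ =>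
      (integrable_dirac (by simp)).smul_measure (hwtop j)]
    simp [integral_smul_measure]
  have hνae : ∀ᵐ x ∂ν, ∃ j, x = z j := by
    rw [ae_iff]
    simp [ν]
  -- The atoms were chosen among points whose sections are integrable, so integrability
  -- against the product survives the replacement of `μ i`.
  have hνg' : ∀ j, Integrable (fun p : X i × (∀ j, X j) => g' j (Function.update p.2 i p.1))
      (ν.prod (Measure.pi μ)) := fun j => by
    refine (integrable_prod_iff ((hg' j).comp hΦ).aestronglyMeasurable).2 ⟨?_, hνint _⟩
    filter_upwards [hνae] with x hx
    obtain ⟨l, rfl⟩ := hx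
    exact hzA l j
  refine ⟨ν, ?_, ⟨?_, ?_, ?_⟩, ?_⟩
  · have hcard : Fintype.card (Fin n' ⊕ Fin (n i)) = n' + n i := by simp
    rw [← hcard]
    exact ⟨w, z, hw1, rfl⟩
  · intro j
    rcases eq_or_ne j i with rfl | h
    · simpa
    · simpa [h] using hprob j
  · intro j
    rw [← map_update_prod_pi]
    refine ⟨(integrable_map_measure (hg' j).aestronglyMeasurable hΦ.aemeasurable).2 (hνg' j), ?_⟩
    rw [integral_map hΦ.aemeasurable (hg' j).aestronglyMeasurable, integral_prod _ (hνg' j), hνval]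
    refine (hfz (Sum.inl j)).trans_le ?_
    have h2 := (hG' j).2
    rwa [← hself, integral_map hΦ.aemeasurable (hg' j).aestronglyMeasurable,
      integral_prod _ (hint j)] at h2
  · intro j k
    rcases eq_or_ne j i with rfl | h
    · rw [Function.update_self]
      refine ⟨hνint _, ?_⟩
      rw [hνval]
      exact (hfz (Sum.inr k)).trans_le (hG _ k).2
    · rw [Function.update_of_ne h]
      exact hG j k
  · rw [hlint]
    refine hcz.trans_eq ?_
    simp [ν, lintegral_finsetSum_measure, lintegral_smul_measure]

/-! ### The reduction theorem -/

/-- **Reduction theorem for OUQ over product measures.** On a finite product of Polish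
spaces, the supremum of `∫⁻ r dμ` over product probability measures `μ = ⊗ᵢ μᵢ`
subject to `n'` global linear moment constraints and `nᵢ` marginal linear moment
constraints is attained by restricting each marginal `μᵢ` to convex combinations
of at most `n' + nᵢ + 1` Dirac masses. -/
theorem stmt3 {m : ℕ} (X : Fin m → Type*)
    [∀ i, TopologicalSpace (X i)] [∀ i, PolishSpace (X i)]
    [∀ i, MeasurableSpace (X i)] [∀ i, BorelSpace (X i)] [∀ i, Nonempty (X i)]
    (n' : ℕ) (n : Fin m → ℕ)
    (g' : Fin n' → ((∀ i, X i) → ℝ)) (hg' : ∀ j, Measurable (g' j))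
    (g : ∀ i, Fin (n i) → (X i → ℝ)) (hg : ∀ i j, Measurable (g i j))
    (r : (∀ i, X i) → ℝ≥0∞) (hr : Measurable r) :
    sSup {v : ℝ≥0∞ | ∃ μ : ∀ i, Measure (X i),
        (∀ i, IsProbabilityMeasure (μ i)) ∧
        (∀ j, Integrable (g' j) (Measure.pi μ) ∧ (∫ x, g' j x ∂Measure.pi μ) ≤ 0) ∧
        (∀ i j, Integrable (g i j) (μ i) ∧ (∫ x, g i j x ∂μ i) ≤ 0) ∧
        v = ∫⁻ x, r x ∂Measure.pi μ} =
    sSup {v : ℝ≥0∞ | ∃ μ : ∀ i, Measure (X i),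
        (∀ i, IsProbabilityMeasure (μ i)) ∧
        (∀ j, Integrable (g' j) (Measure.pi μ) ∧ (∫ x, g' j x ∂Measure.pi μ) ≤ 0) ∧
        (∀ i j, Integrable (g i j) (μ i) ∧ (∫ x, g i j x ∂μ i) ≤ 0) ∧
        (∀ i, DiracComb (n' + n i) (μ i)) ∧
        v = ∫⁻ x, r x ∂Measure.pi μ} := by
  refine le_antisymm (sSup_le ?_) (sSup_le_sSup ?_)
  · rintro _ ⟨μ, h1, h2, h3, rfl⟩
    refine le_of_forall_lt fun c hc => ?_
    have key : ∀ s : Finset (Fin m), ∃ ν : ∀ i, Measure (X i), Admissible g' g ν ∧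
        (∀ i ∈ s, DiracComb (n' + n i) (ν i)) ∧ c < ∫⁻ x, r x ∂Measure.pi ν := by
      intro s
      induction s using Finset.induction_on with
      | empty => exact ⟨μ, ⟨h1, h2, h3⟩, by simp, hc⟩
      | insert i s _ ih =>
        obtain ⟨ν, hν, hs, hcν⟩ := ih
        obtain ⟨ρ, hρ, hadm, hcρ⟩ := exists_update hg' hr hν hcν i
        refine ⟨Function.update ν i ρ, hadm, fun j hj => ?_, hcρ⟩
        rcases eq_or_ne j i with rfl | h
        · rwa [Function.update_self]
        · rw [Function.update_of_ne h]
          exact hs j (Finset.mem_of_mem_insert_of_ne hj h)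
    obtain ⟨ν, ⟨hp, hg1, hg2⟩, hd, hcν⟩ := key Finset.univ
    exact hcν.trans_le (le_sSup ⟨ν, hp, hg1, hg2, fun i => hd i (Finset.mem_univ i), rfl⟩)
  · rintro v ⟨μ, h1, h2, h3, _, hv⟩
    exact ⟨μ, h1, h2, h3, hv⟩
end

section
/- Let X₁, …, X_m be nonempty Polish spaces with their Borel σ-algebras, X = X₁ × ⋯ × X_m with the product σ-algebra, and let G be a set of measurable real-valued functions on X. Fix n' ∈ ℕ and n₁, …, n_m ∈ ℕ, and for each f ∈ G let g'_{f,j} : X → ℝ (j = 1, …, n') and g^i_{f,j} : X_i → ℝ (j = 1, …, n_i) be measurable constraint functions, and let r_f : X → [0, +∞] be measurable. Define the admissible set A as the set of pairs (f, μ) with f ∈ G and μ = μ₁ ⊗ ⋯ ⊗ μ_m a product of Borel probability measures under which all g'_{f,j} and g^i_{f,j} are integrable with ∫ g'_{f,j} dμ ≤ 0 and ∫ g^i_{f,j} dμ_i ≤ 0, and define A_Δ ⊆ A by additionally requiring that each μ_i is a convex combination of at most n' + n_i + 1 Dirac masses on X_i. Then sup_{(f,μ) ∈ A} ∫ r_f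 dμ = sup_{(f,μ) ∈ A_Δ} ∫ r_f dμ. -/
/-!
Only the bound of the full supremum by the discrete one has content. It suffices to show that, for
each admissible pair `(f, μ)` and each number `c < ∫⁻ r_f dμ`, there is a product of discrete
marginals which is still admissible and whose value is still above `c`. The marginals are
replaced one at a time (`exists_replace_marginals`).

When all marginals but `μ i` are held fixed, Fubini turns the `n'` global constraints into linear
moment constraints on `μ i`, and the objective into the integral of a `[0, ∞]`-valued function
against `μ i` (`exists_replace_marginal`). Together with the `n i` marginal constraints, these are
`n' + n i` moments of a measure on a single space, and `exists_weighted_points` preserves them with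
`n' + n i + 1` atoms. That lemma combines two facts.

* The vector of moments and truncated objective is a mean, so it lies in the convex hull of the
  values taken on any set of full measure (`integral_mem_of_convex`). The hull need not be closed:
  when the mean lies outside it, a weakly separating functional is almost surely constant, and the
  dimension drops.
* A finite convex combination with too many terms satisfies a linear relation, along which the
  weights can be moved, without lowering the objective, until one of them vanishes
  (`exists_small_support`). Since the objective need only not decrease, it does not cost an
  additional atom.

The strict slack `c` makes truncation harmless when the objective is not integrable, and taking the
atoms in a set of full measure keeps the global constraints integrable. The topology on the factors
is used only for the measurability of singletons.
-/

open MeasureTheory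
open scoped ENNReal

/-! ### Barycentres and finitely supported measures -/

/-- In a finite-dimensional space, a point outside a nonempty convex set can be weakly separated from
it by a nonzero functional; no closedness or interior is needed. -/
lemma exists_weak_separation {E : Type*} [NormedAddCommGroup E] [NormedSpace ℝ E]
    [FiniteDimensional ℝ E] {s : Set E} (hs : Convex ℝ s) (hne : s.Nonempty) (h0 : (0 : E) ∉ s) :
    ∃ l : E →ₗ[ℝ] ℝ, l ≠ 0 ∧ ∀ y ∈ s, 0 ≤ l y := by
  by_cases hint : (interior s).Nonempty
  · obtain ⟨f, hf, hfs⟩ := geometric_hahn_banach_of_nonempty_interior_point hs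
      (fun h => h0 (interior_subset h)) hint
    refine ⟨-(f : E →ₗ[ℝ] ℝ), ?_, fun y hy => ?_⟩
    · intro h
      apply hf
      ext y
      simpa using congrArg (fun l : E →ₗ[ℝ] ℝ => l y) h
    · have := hfs y hy
      simpa using this
  · -- An empty interior forces `s` into a proper affine subspace, on which some functional is
    -- constant; the sign of the functional is then chosen to make this constant nonnegative.
    rw [hs.interior_nonempty_iff_affineSpan_eq_top] at hint
    have hdir : (affineSpan ℝ s).direction < ⊤ := by
      rw [lt_top_iff_ne_top]
      intro h
      exact hint ((AffineSubspace.direction_eq_top_iff_of_nonempty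
        ((affineSpan_nonempty (k := ℝ)).2 hne)).1 h)
    obtain ⟨f, hf, hker⟩ := Submodule.exists_le_ker_of_lt_top _ hdir
    obtain ⟨x, hx⟩ := hne
    have hconst : ∀ y ∈ s, f y = f x := by
      intro y hy
      have h1 : y -ᵥ x ∈ (affineSpan ℝ s).direction :=
        AffineSubspace.vsub_mem_direction (subset_affineSpan ℝ s hy) (subset_affineSpan ℝ s hx)
      have h2 := hker h1
      rw [LinearMap.mem_ker, vsub_eq_sub, map_sub] at h2
      linarith
    rcases le_total 0 (f x) with h | h
    · exact ⟨f, hf, fun y hy => by rw [hconst y hy]; exact h⟩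
    · exact ⟨-f, neg_ne_zero.2 hf, fun y hy => by
        rw [LinearMap.neg_apply, hconst y hy]; linarith⟩

/-- Barycentre theorem, centred form, by induction on the dimension: if `0 ∉ s`, a weakly
separating functional `l` is nonnegative on `s` and has mean zero, so `f` lives in `ker l`. -/
lemma zero_mem_of_integral_eq_zero {Z : Type*} [MeasurableSpace Z] (ν : Measure Z)
    [IsProbabilityMeasure ν] (d : ℕ) :
    ∀ {E : Type*} [NormedAddCommGroup E] [NormedSpace ℝ E] [FiniteDimensional ℝ E] {s : Set E},
      Module.finrank ℝ E = d → Convex ℝ s → ∀ {f : Z → E}, Integrable f ν →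
      (∀ᵐ z ∂ν, f z ∈ s) → ∫ z, f z ∂ν = 0 → (0 : E) ∈ s := by
  induction d using Nat.strong_induction_on with
  | _ d ih =>
  intro E _ _ _ s hd hs f hf hfs hint
  by_contra h0
  have hne : s.Nonempty := by
    obtain ⟨z, hz⟩ := hfs.exists
    exact ⟨_, hz⟩
  obtain ⟨l, hl, hls⟩ := exists_weak_separation hs hne h0
  let L : E →L[ℝ] ℝ := LinearMap.toContinuousLinearMap l
  have hLf : Integrable (fun z => L (f z)) ν := L.integrable_comp hf
  have hL0 : ∫ z, L (f z) ∂ν = 0 := by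
    rw [L.integral_comp_comm hf, hint, map_zero]
  have hae : (fun z => L (f z)) =ᵐ[ν] 0 :=
    (integral_eq_zero_iff_of_nonneg_ae (by filter_upwards [hfs] with z hz using hls _ hz) hLf).1 hL0
  obtain ⟨p, hp⟩ := LinearMap.exists_leftInverse_of_injective l.ker.subtype
    (Submodule.ker_subtype _)
  let P : E →L[ℝ] l.ker := LinearMap.toContinuousLinearMap p
  have hlt : Module.finrank ℝ l.ker < d := by
    rw [← hd]
    exact Submodule.finrank_lt (by simpa [lt_top_iff_ne_top] using hl)
  have key := ih _ hlt (E := l.ker) (s := l.ker.subtype ⁻¹' s) rfl (hs.linear_preimage _)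
    (f := fun z => P (f z)) (P.integrable_comp hf) ?_ ?_
  · exact h0 (by simpa using key)
  · filter_upwards [hfs, hae] with z hz hz0
    have hmem : f z ∈ l.ker := hz0
    have : p (f z) = ⟨f z, hmem⟩ := by
      simpa using congrArg (fun q : l.ker →ₗ[ℝ] l.ker => q ⟨f z, hmem⟩) hp
    change ((p (f z) : l.ker) : E) ∈ s
    rw [this]
    exact hz
  · rw [P.integral_comp_comm hf, hint, map_zero]

/-- The barycentre theorem: in finite dimension the mean of an integrable map lies in every
convex set containing almost all its values, whether or not that set is closed. -/
lemma integral_mem_of_convex {Z : Type*} [MeasurableSpace Z] (ν : Measure Z)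
    [IsProbabilityMeasure ν] {E : Type*} [NormedAddCommGroup E] [NormedSpace ℝ E]
    [FiniteDimensional ℝ E] {s : Set E} (hs : Convex ℝ s) {f : Z → E} (hf : Integrable f ν)
    (hfs : ∀ᵐ z ∂ν, f z ∈ s) : ∫ z, f z ∂ν ∈ s := by
  have := zero_mem_of_integral_eq_zero ν _ (s := (fun y => (∫ z, f z ∂ν) + y) ⁻¹' s) rfl
    (hs.translate_preimage_right _) (f := fun z => f z - ∫ z, f z ∂ν)
    (hf.sub (integrable_const _)) (by filter_upwards [hfs] with z hz; simpa using hz)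
    (by rw [integral_sub hf (integrable_const _)]; simp)
  simpa using this

/-- A linear-programming form of Carathéodory's theorem: any nonnegative combination of points can
be replaced by one with at most `card ι + 1` terms, of the same mass and the same `ι`-indexed
moments, that does not decrease the objective `b`. A linear relation among the vectors `(a i, 1)`,
oriented so as not to decrease the objective, is followed until a weight vanishes. -/
lemma exists_small_support {ι κ : Type*} [Fintype ι] (a : κ → ι → ℝ) (b : κ → ℝ) (N : ℕ) :
    ∀ (t : Finset κ), t.card = N → ∀ w : κ → ℝ, (∀ i ∈ t, 0 ≤ w i) →
      ∃ (t' : Finset κ) (w' : κ → ℝ), t' ⊆ t ∧ (∀ i ∈ t', 0 ≤ w' i) ∧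
        t'.card ≤ Fintype.card ι + 1 ∧ ∑ i ∈ t', w' i = ∑ i ∈ t, w i ∧
        ∑ i ∈ t', w' i • a i = ∑ i ∈ t, w i • a i ∧
        ∑ i ∈ t, w i * b i ≤ ∑ i ∈ t', w' i * b i := by
  classical
  induction N with
  | zero =>
    intro t ht w hw
    exact ⟨t, w, subset_rfl, hw, by omega, rfl, rfl, le_rfl⟩
  | succ N ih =>
    intro t ht w hw
    by_cases hcard : t.card ≤ Fintype.card ι + 1
    · exact ⟨t, w, subset_rfl, hw, hcard, rfl, rfl, le_rfl⟩
    have hdep : ¬ LinearIndependent ℝ (fun i : t => ((a i, 1) : (ι → ℝ) × ℝ)) := by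
      intro h
      have := h.fintype_card_le_finrank
      simp at this
      omega
    obtain ⟨g₀, hg₀, i₀, hi₀⟩ := Fintype.not_linearIndependent_iff.1 hdep
    obtain ⟨g, hga, hg1, hgb, hne⟩ : ∃ g : κ → ℝ, ∑ i ∈ t, g i • a i = 0 ∧ ∑ i ∈ t, g i = 0 ∧
        0 ≤ ∑ i ∈ t, g i * b i ∧ ∃ i ∈ t, g i ≠ 0 := by
      let g₁ : κ → ℝ := fun i => if h : i ∈ t then g₀ ⟨i, h⟩ else 0
      have hval : ∀ i : t, g₁ i = g₀ i := fun i => by simp [g₁]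
      have h1 : ∑ i ∈ t, g₁ i • a i = 0 := by
        rw [← Finset.sum_coe_sort t]
        simpa [hval, Prod.fst_sum] using congrArg Prod.fst hg₀
      have h2 : ∑ i ∈ t, g₁ i = 0 := by
        rw [← Finset.sum_coe_sort t]
        simpa [hval, Prod.snd_sum] using congrArg Prod.snd hg₀
      have h3 : ∃ i ∈ t, g₁ i ≠ 0 := ⟨i₀, i₀.2, by rw [hval]; exact hi₀⟩
      rcases le_total 0 (∑ i ∈ t, g₁ i * b i) with h | h
      · exact ⟨g₁, h1, h2, h, h3⟩
      · refine ⟨-g₁, ?_, ?_, ?_, ?_⟩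
        · simpa using h1
        · simpa using h2
        · simpa using h
        · simpa using h3
    have hneg : (t.filter (fun i => g i < 0)).Nonempty := by
      by_contra hcon
      rw [Finset.not_nonempty_iff_eq_empty, Finset.filter_eq_empty_iff] at hcon
      obtain ⟨i, hi, hgi⟩ := hne
      exact hgi ((Finset.sum_eq_zero_iff_of_nonneg fun j hj => not_lt.1 (hcon hj)).1 hg1 i hi)
    obtain ⟨j, hj, hmin⟩ := Finset.exists_min_image _ (fun i => w i / (-g i)) hneg
    obtain ⟨hjt, hgj⟩ := Finset.mem_filter.1 hj
    -- The step length at which the first weight, that of `j`, vanishes.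
    set ε := w j / (-g j) with hε
    have hε0 : 0 ≤ ε := div_nonneg (hw j hjt) (by linarith)
    let w₁ : κ → ℝ := fun i => w i + ε * g i
    have hw₁j : w₁ j = 0 := by
      have : g j ≠ 0 := hgj.ne
      simp only [w₁, hε]
      field_simp
      ring
    have hw₁ : ∀ i ∈ t, 0 ≤ w₁ i := by
      intro i hi
      by_cases hgi : g i < 0
      · have h := hmin i (Finset.mem_filter.2 ⟨hi, hgi⟩)
        have h' : ε * (-g i) ≤ w i := (le_div_iff₀ (by linarith)).1 h
        simp only [w₁]
        linarith
      · exact add_nonneg (hw i hi) (mul_nonneg hε0 (not_lt.1 hgi))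
    obtain ⟨t', w', hsub, hpos, hc, hs1, hsa, hsb⟩ := ih (t.erase j)
      (by rw [Finset.card_erase_of_mem hjt, ht]; rfl) w₁
      (fun i hi => hw₁ i (Finset.mem_of_mem_erase hi))
    refine ⟨t', w', hsub.trans (Finset.erase_subset _ _), hpos, hc, ?_, ?_, ?_⟩
    · rw [hs1, Finset.sum_erase _ hw₁j]
      simp only [w₁, Finset.sum_add_distrib, ← Finset.mul_sum, hg1]
      simp
    · rw [hsa, Finset.sum_erase _ (by rw [hw₁j, zero_smul])]
      simp only [w₁, add_smul, mul_smul, Finset.sum_add_distrib, ← Finset.smul_sum, hga]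
      simp
    · refine le_trans ?_ hsb
      rw [Finset.sum_erase _ (by rw [hw₁j, zero_mul])]
      simp only [w₁, add_mul, mul_assoc, Finset.sum_add_distrib, ← Finset.mul_sum]
      have := mul_nonneg hε0 hgb
      linarith

/-- Moment reduction on a single space: a probability measure can be replaced by `card ι + 1`
weighted points, taken from a prescribed set of full measure, with the same `ι`-indexed moments and
with the integral of `R` still above any given `c < ∫⁻ R`. The slack `c` accounts for an infinite
integral of `R`, which is handled by truncation. -/
lemma exists_weighted_points {Z : Type*} [MeasurableSpace Z] (ν : Measure Z)
    [IsProbabilityMeasure ν] {ι : Type*} [Fintype ι] {φ : Z → ι → ℝ} (hφ : Integrable φ ν)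
    {R : Z → ℝ≥0∞} (hR : Measurable R) {P : Z → Prop} (hP : ∀ᵐ z ∂ν, P z) {c : ℝ≥0∞}
    (hc : c < ∫⁻ z, R z ∂ν) :
    ∃ (w : Fin (Fintype.card ι + 1) → ℝ≥0∞) (z : Fin (Fintype.card ι + 1) → Z),
      ∑ j, w j = 1 ∧ (∀ j, P (z j)) ∧ ∑ j, (w j).toReal • φ (z j) = ∫ z, φ z ∂ν ∧
      c < ∑ j, w j * R (z j) := by
  classical
  obtain ⟨M, hM⟩ : ∃ M : ℕ, c < ∫⁻ z, min (R z) M ∂ν := by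
    have h : ∫⁻ z, R z ∂ν = ⨆ M : ℕ, ∫⁻ z, min (R z) M ∂ν := by
      rw [← lintegral_iSup (fun M => hR.min measurable_const)
        (fun M N hMN z => min_le_min le_rfl (by exact_mod_cast hMN))]
      congr with z
      change _ = ⨆ M : ℕ, R z ⊓ (M : ℝ≥0∞)
      rw [← inf_iSup_eq, ENNReal.iSup_natCast, inf_top_eq]
    rw [h] at hc
    exact lt_iSup_iff.1 hc
  let ρ : Z → ℝ := fun z => (min (R z) M).toReal
  have hfin : ∀ z, min (R z) (M : ℝ≥0∞) ≠ ∞ := fun z =>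
    ne_top_of_le_ne_top (ENNReal.natCast_ne_top M) (min_le_right _ _)
  have hρ0 : ∀ z, 0 ≤ ρ z := fun z => ENNReal.toReal_nonneg
  have hρm : Measurable ρ := (hR.min measurable_const).ennreal_toReal
  have hρof : ∀ z, ENNReal.ofReal (ρ z) = min (R z) M := fun z => ENNReal.ofReal_toReal (hfin z)
  have hρi : Integrable ρ ν := by
    refine Integrable.of_bound hρm.aestronglyMeasurable (M : ℝ) (ae_of_all _ fun z => ?_)
    rw [Real.norm_of_nonneg (hρ0 z)]
    exact ENNReal.toReal_le_of_le_ofReal (by positivity) (by simp)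
  have hρint : ENNReal.ofReal (∫ z, ρ z ∂ν) = ∫⁻ z, min (R z) M ∂ν := by
    rw [ofReal_integral_eq_lintegral_ofReal hρi (ae_of_all _ hρ0)]
    simp only [hρof]
  have hmem := integral_mem_of_convex ν
    (convex_convexHull ℝ ((fun z => (φ z, ρ z)) '' {z | P z})) (hφ.prodMk hρi)
    (by filter_upwards [hP] with z hz using subset_convexHull ℝ _ ⟨z, hz, rfl⟩)
  rw [convexHull_eq] at hmem
  obtain ⟨κ, t, w, y, hw, hw1, hy, hcm⟩ := hmem
  rw [Finset.centerMass_eq_of_sum_1 _ _ hw1, integral_pair hφ hρi] at hcm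
  obtain ⟨z₀, hz₀⟩ := hP.exists
  have hx : ∀ i, ∃ x, P x ∧ (i ∈ t → (φ x, ρ x) = y i) := by
    intro i
    by_cases hi : i ∈ t
    · obtain ⟨x, hx, hxy⟩ := hy i hi
      exact ⟨x, hx, fun _ => hxy⟩
    · exact ⟨z₀, hz₀, fun h => absurd h hi⟩
  choose x hxP hxy using hx
  have hcm' : ∑ i ∈ t, w i • ((φ (x i), ρ (x i)) : (ι → ℝ) × ℝ) =
      (∫ z, φ z ∂ν, ∫ z, ρ z ∂ν) := by
    rw [← hcm]
    exact Finset.sum_congr rfl fun i hi => by rw [hxy i hi]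
  obtain ⟨t', w', -, hpos, hcard, hs1, hsa, hsb⟩ :=
    exists_small_support (fun i => φ (x i)) (fun i => ρ (x i)) _ t rfl w hw
  have hA : ∑ i ∈ t, w i • φ (x i) = ∫ z, φ z ∂ν := by
    simpa [Prod.fst_sum] using congrArg Prod.fst hcm'
  have hB : ∑ i ∈ t, w i * ρ (x i) = ∫ z, ρ z ∂ν := by
    simpa [Prod.snd_sum] using congrArg Prod.snd hcm'

  -- The support is relabelled by `Fin (card ι + 1)`; unused labels get weight zero at `z₀`.
  obtain ⟨e⟩ : Nonempty (t' ↪ Fin (Fintype.card ι + 1)) :=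
    Function.Embedding.nonempty_of_card_le (by simpa using hcard)
  let W : Fin (Fintype.card ι + 1) → ℝ≥0∞ :=
    Function.extend e (fun i => ENNReal.ofReal (w' i)) (fun _ => 0)
  let Y : Fin (Fintype.card ι + 1) → Z := Function.extend e (fun i => x i) (fun _ => z₀)
  have hW : ∀ i, W (e i) = ENNReal.ofReal (w' i) := fun i => e.injective.extend_apply _ _ i
  have hY : ∀ i, Y (e i) = x i := fun i => e.injective.extend_apply _ _ i
  have hW0 : ∀ j ∉ Set.range e, W j = 0 := fun j hj => Function.extend_apply' _ _ _ hj
  refine ⟨W, Y, ?_, ?_, ?_, ?_⟩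
  · rw [← Fintype.sum_of_injective e e.injective (fun i => ENNReal.ofReal (w' i)) W hW0
      (fun i => (hW i).symm), Finset.sum_coe_sort t' (fun i => ENNReal.ofReal (w' i)),
      ← ENNReal.ofReal_sum_of_nonneg hpos, hs1, hw1, ENNReal.ofReal_one]
  · intro j
    by_cases hj : ∃ i, e i = j
    · obtain ⟨i, rfl⟩ := hj
      rw [hY]
      exact hxP i
    · simp only [Y, Function.extend_apply' _ _ _ hj]
      exact hz₀
  · rw [← Fintype.sum_of_injective e e.injective (fun i => w' i • φ (x i))
      (fun j => (W j).toReal • φ (Y j)) (fun j hj => by simp [hW0 j hj])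
      (fun i => by simp only [hW, hY, ENNReal.toReal_ofReal (hpos i i.2)]),
      Finset.sum_coe_sort t' (fun i => w' i • φ (x i)), hsa, hA]
  · rw [← Fintype.sum_of_injective e e.injective (fun i => ENNReal.ofReal (w' i) * R (x i))
      (fun j => W j * R (Y j)) (fun j hj => by simp [hW0 j hj])
      (fun i => by simp only [hW, hY]),
      Finset.sum_coe_sort t' (fun i => ENNReal.ofReal (w' i) * R (x i))]
    calc c < ∫⁻ z, min (R z) M ∂ν := hM
      _ = ENNReal.ofReal (∫ z, ρ z ∂ν) := hρint.symm
      _ ≤ ENNReal.ofReal (∑ i ∈ t', w' i * ρ (x i)) := ENNReal.ofReal_le_ofReal (hB ▸ hsb)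
      _ = ∑ i ∈ t', ENNReal.ofReal (w' i * ρ (x i)) :=
        ENNReal.ofReal_sum_of_nonneg fun i hi => mul_nonneg (hpos i hi) (hρ0 _)
      _ ≤ ∑ i ∈ t', ENNReal.ofReal (w' i) * R (x i) := by
        refine Finset.sum_le_sum fun i hi => ?_
        rw [ENNReal.ofReal_mul (hpos i hi), hρof]
        gcongr
        exact min_le_left _ _

/-! ### Product measures -/

/-- Replacing one factor of a product measure amounts to resampling that coordinate. Every
coordinate of `Measure.pi μ` is kept, and coordinate `i` is then overwritten, which avoids splitting
the index set; this requires `μ i` to have total mass one. -/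
lemma pi_update_eq_map {m : ℕ} {X : Fin m → Type*} [∀ i, MeasurableSpace (X i)]
    (μ : ∀ i, Measure (X i)) [∀ i, IsProbabilityMeasure (μ i)] (i : Fin m) (ν : Measure (X i))
    [IsProbabilityMeasure ν] :
    Measure.pi (Function.update μ i ν) =
      (ν.prod (Measure.pi μ)).map (fun p => Function.update p.2 i p.1) := by
  have hmeas : Measurable (fun p : X i × (∀ k, X k) => Function.update p.2 i p.1) :=
    measurable_update'.comp measurable_swap
  have : ∀ k, IsProbabilityMeasure (Function.update μ i ν k) := by
    intro k
    by_cases hk : k = i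
    · subst hk; simpa using ‹IsProbabilityMeasure ν›
    · simpa [hk] using ‹∀ i, IsProbabilityMeasure (μ i)› k
  refine Measure.pi_eq fun s hs => ?_
  rw [Measure.map_apply hmeas (MeasurableSet.univ_pi hs)]
  have hpre : (fun p : X i × (∀ k, X k) => Function.update p.2 i p.1) ⁻¹' Set.univ.pi s =
      s i ×ˢ Set.univ.pi (Function.update s i Set.univ) := by
    ext p
    simp only [Set.mem_preimage, Set.mem_univ_pi, Set.mem_prod]
    constructor
    · intro h
      refine ⟨by simpa using h i, fun k => ?_⟩
      by_cases hk : k = i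
      · subst hk; simp
      · simpa [hk] using h k
    · rintro ⟨h1, h2⟩ k
      by_cases hk : k = i
      · subst hk; simpa using h1
      · simpa [hk] using h2 k
  rw [hpre, Measure.prod_prod, Measure.pi_pi, ← Finset.mul_prod_erase _ _ (Finset.mem_univ i),
    ← Finset.mul_prod_erase _ (fun k => Function.update μ i ν k (s k)) (Finset.mem_univ i)]
  simp only [Function.update_self, measure_univ, one_mul]
  congr 1
  refine Finset.prod_congr rfl fun k hk => ?_
  rw [Function.update_of_ne (Finset.ne_of_mem_erase hk),
    Function.update_of_ne (Finset.ne_of_mem_erase hk)]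

section DiracSums

variable {Z : Type*} [MeasurableSpace Z] [MeasurableSingletonClass Z] {N : ℕ}
  {w : Fin N → ℝ≥0∞} (z : Fin N → Z)

lemma integrable_dirac_sum (hw : ∀ j, w j ≠ ∞) (F : Z → ℝ) :
    Integrable F (∑ j, w j • Measure.dirac (z j)) :=
  integrable_finsetSum_measure.2 fun j _ =>
    (integrable_dirac (by simp)).smul_measure (hw j)

lemma integral_dirac_sum (hw : ∀ j, w j ≠ ∞) (F : Z → ℝ) :
    ∫ x, F x ∂(∑ j, w j • Measure.dirac (z j)) = ∑ j, (w j).toReal * F (z j) := by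
  rw [integral_finsetSum_measure fun j _ => (integrable_dirac (by simp)).smul_measure (hw j)]
  simp [integral_smul_measure]

lemma lintegral_dirac_sum (F : Z → ℝ≥0∞) :
    ∫⁻ x, F x ∂(∑ j, w j • Measure.dirac (z j)) = ∑ j, w j * F (z j) := by
  rw [lintegral_finsetSum_measure]
  simp [lintegral_smul_measure]

lemma ae_dirac_sum {P : Z → Prop} (hP : ∀ j, P (z j)) :
    ∀ᵐ x ∂(∑ j, w j • Measure.dirac (z j)), P x := by
  rw [ae_iff, Measure.finsetSum_apply]
  refine Finset.sum_eq_zero fun j _ => ?_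
  simp [hP j]

end DiracSums

section Product

variable {m : ℕ} {X : Fin m → Type*} [∀ i, MeasurableSpace (X i)]

/-- Feasibility of the product of the marginals `μ` for global constraints `G'` and marginal
constraints `H`. -/
def Feasible {n' : ℕ} {n : Fin m → ℕ} (G' : Fin n' → (∀ i, X i) → ℝ)
    (H : ∀ i, Fin (n i) → X i → ℝ) (μ : ∀ i, Measure (X i)) : Prop :=
  (∀ i, IsProbabilityMeasure (μ i)) ∧
  (∀ j, Integrable (G' j) (Measure.pi μ) ∧ (∫ x, G' j x ∂Measure.pi μ) ≤ 0) ∧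
  (∀ i j, Integrable (H i j) (μ i) ∧ (∫ x, H i j x ∂μ i) ≤ 0)

/-- One marginal of a feasible product measure can be replaced by a convex combination of Dirac
masses, leaving the others alone, keeping feasibility and a value above `c`. With the other
marginals fixed, each global constraint becomes, by Fubini, a linear constraint on `μ i`; these
partial integrals make sense only almost everywhere, so the support has to avoid a null set. -/
lemma exists_replace_marginal [∀ i, MeasurableSingletonClass (X i)] {n' : ℕ} {n : Fin m → ℕ}
    {G' : Fin n' → (∀ i, X i) → ℝ} (hG' : ∀ j, Measurable (G' j))
    {H : ∀ i, Fin (n i) → X i → ℝ} {R : (∀ i, X i) → ℝ≥0∞} (hR : Measurable R)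
    {μ : ∀ i, Measure (X i)} (hμ : Feasible G' H μ) {c : ℝ≥0∞}
    (hc : c < ∫⁻ x, R x ∂Measure.pi μ) (i : Fin m) :
    ∃ ν : Measure (X i), DiracComb (n' + n i) ν ∧ Feasible G' H (Function.update μ i ν) ∧
      c < ∫⁻ x, R x ∂Measure.pi (Function.update μ i ν) := by
  obtain ⟨hprob, hglob, hmarg⟩ := hμ
  let Φ : X i × (∀ k, X k) → ∀ k, X k := fun p => Function.update p.2 i p.1
  have hΦ : Measurable Φ := measurable_update'.comp measurable_swap
  have hself : Measure.pi μ = ((μ i).prod (Measure.pi μ)).map Φ := by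
    simpa using pi_update_eq_map μ i (μ i)
  have hGm : ∀ j, Measurable (fun p => G' j (Φ p)) := fun j => (hG' j).comp hΦ
  have hGi : ∀ j, Integrable (fun p => G' j (Φ p)) ((μ i).prod (Measure.pi μ)) := by
    intro j
    have h := (hglob j).1
    rw [hself] at h
    exact (integrable_map_measure (hG' j).aestronglyMeasurable hΦ.aemeasurable).1 h
  have hGint : ∀ j, ∫ x, ∫ y, G' j (Φ (x, y)) ∂Measure.pi μ ∂(μ i) ≤ 0 := by
    intro j
    have h := (hglob j).2
    rw [hself, integral_map hΦ.aemeasurable (hG' j).aestronglyMeasurable,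
      integral_prod _ (hGi j)] at h
    exact h
  let φ : X i → (Fin n' ⊕ Fin (n i)) → ℝ := fun x =>
    Sum.elim (fun j => ∫ y, G' j (Φ (x, y)) ∂Measure.pi μ) (fun j => H i j x)
  have hφ' : ∀ k, Integrable (fun x => φ x k) (μ i) := by
    rintro (j | j)
    · exact (hGi j).integral_prod_left
    · exact (hmarg i j).1
  have hφ : Integrable φ (μ i) := Integrable.of_eval hφ'
  have hae : ∀ᵐ x ∂(μ i), ∀ j, Integrable (fun y => G' j (Φ (x, y))) (Measure.pi μ) :=
    ae_all_iff.2 fun j => (hGi j).prod_right_ae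
  have hRm : Measurable (fun p => R (Φ p)) := hR.comp hΦ
  have hc' : c < ∫⁻ x, ∫⁻ y, R (Φ (x, y)) ∂Measure.pi μ ∂(μ i) := by
    rwa [hself, lintegral_map hR hΦ, lintegral_prod _ hRm.aemeasurable] at hc
  have hcard : Fintype.card (Fin n' ⊕ Fin (n i)) = n' + n i := by simp
  have hpts := exists_weighted_points (μ i) hφ hRm.lintegral_prod_right' hae hc'
  rw [hcard] at hpts
  obtain ⟨w, z, hw1, hz, hmom, hval⟩ := hpts
  have hw : ∀ j, w j ≠ ∞ := by
    intro j
    refine ne_top_of_le_ne_top ENNReal.one_ne_top ?_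
    rw [← hw1]
    exact Finset.single_le_sum (f := w) (fun _ _ => zero_le) (Finset.mem_univ j)
  have hmom' : ∀ k, ∑ j, (w j).toReal * φ (z j) k = ∫ x, φ x k ∂(μ i) := by
    intro k
    rw [← eval_integral hφ', ← hmom]
    simp
  let ν : Measure (X i) := ∑ j, w j • Measure.dirac (z j)
  have hν : IsProbabilityMeasure ν := ⟨by simp [ν, hw1]⟩
  have hupd : Measure.pi (Function.update μ i ν) = (ν.prod (Measure.pi μ)).map Φ :=
    pi_update_eq_map μ i ν
  have hGν : ∀ j, Integrable (fun p => G' j (Φ p)) (ν.prod (Measure.pi μ)) := fun j =>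
    (integrable_prod_iff (hGm j).aestronglyMeasurable).2
      ⟨ae_dirac_sum z fun k => hz k j, integrable_dirac_sum z hw _⟩
  refine ⟨ν, ⟨w, z, hw1, rfl⟩, ⟨?_, ?_, ?_⟩, ?_⟩
  · intro k
    by_cases hk : k = i
    · subst hk; simpa using hν
    · simpa [hk] using hprob k
  · intro j
    rw [hupd]
    refine ⟨(integrable_map_measure (hG' j).aestronglyMeasurable hΦ.aemeasurable).2 (hGν j), ?_⟩
    rw [integral_map hΦ.aemeasurable (hG' j).aestronglyMeasurable, integral_prod _ (hGν j),
      integral_dirac_sum z hw]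
    exact (hmom' (Sum.inl j)).trans_le (hGint j)
  · intro k j
    by_cases hk : k = i
    · subst hk
      rw [Function.update_self]
      refine ⟨integrable_dirac_sum z hw _, ?_⟩
      rw [integral_dirac_sum z hw]
      exact (hmom' (Sum.inr j)).trans_le (hmarg k j).2
    · rw [Function.update_of_ne hk]
      exact hmarg k j
  · rw [hupd, lintegral_map hR hΦ, lintegral_prod _ hRm.aemeasurable, lintegral_dirac_sum]
    exact hval

/-- Successive replacement of all marginals indexed by a finite set `S`. -/
lemma exists_replace_marginals [∀ i, MeasurableSingletonClass (X i)] {n' : ℕ} {n : Fin m → ℕ}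
    {G' : Fin n' → (∀ i, X i) → ℝ} (hG' : ∀ j, Measurable (G' j))
    {H : ∀ i, Fin (n i) → X i → ℝ} {R : (∀ i, X i) → ℝ≥0∞} (hR : Measurable R)
    {μ : ∀ i, Measure (X i)} (hμ : Feasible G' H μ) {c : ℝ≥0∞}
    (hc : c < ∫⁻ x, R x ∂Measure.pi μ) (S : Finset (Fin m)) :
    ∃ μ' : ∀ i, Measure (X i), Feasible G' H μ' ∧ (∀ i ∈ S, DiracComb (n' + n i) (μ' i)) ∧
      c < ∫⁻ x, R x ∂Measure.pi μ' := by
  induction S using Finset.induction_on with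
  | empty => exact ⟨μ, hμ, by simp, hc⟩
  | insert i S _ ih =>
    obtain ⟨μ', hμ', hD, hc'⟩ := ih
    obtain ⟨ν, hν, hF, hcν⟩ := exists_replace_marginal hG' hR hμ' hc' i
    refine ⟨Function.update μ' i ν, hF, fun k hk => ?_, hcν⟩
    by_cases hki : k = i
    · subst hki; simpa using hν
    · rw [Function.update_of_ne hki]
      exact hD k (Finset.mem_of_mem_insert_of_ne hk hki)

end Product

/-- **Reduction theorem for OUQ over pairs `(f, μ)`.** For an admissible set of pairs
`(f, μ)` with `f` in a class `G` of measurable functions and `μ = ⊗ᵢ μᵢ` a product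
probability measure subject to `n'` global and `nᵢ` marginal linear moment
constraints (depending on `f`), the supremum of `∫⁻ r_f dμ` is unchanged when each
marginal `μᵢ` is restricted to convex combinations of at most `n' + nᵢ + 1` Dirac
masses. -/
theorem stmt4 {m : ℕ} (X : Fin m → Type*)
    [∀ i, TopologicalSpace (X i)] [∀ i, PolishSpace (X i)]
    [∀ i, MeasurableSpace (X i)] [∀ i, BorelSpace (X i)] [∀ i, Nonempty (X i)]
    (G : Set ((∀ i, X i) → ℝ)) (hG : ∀ f ∈ G, Measurable f)
    (n' : ℕ) (n : Fin m → ℕ)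
    (g' : ((∀ i, X i) → ℝ) → Fin n' → ((∀ i, X i) → ℝ))
    (hg' : ∀ f ∈ G, ∀ j, Measurable (g' f j))
    (g : ((∀ i, X i) → ℝ) → ∀ i, Fin (n i) → (X i → ℝ))
    (hg : ∀ f ∈ G, ∀ i j, Measurable (g f i j))
    (r : ((∀ i, X i) → ℝ) → ((∀ i, X i) → ℝ≥0∞))
    (hr : ∀ f ∈ G, Measurable (r f)) :
    sSup {v : ℝ≥0∞ | ∃ f ∈ G, ∃ μ : ∀ i, Measure (X i),
        (∀ i, IsProbabilityMeasure (μ i)) ∧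
        (∀ j, Integrable (g' f j) (Measure.pi μ) ∧
          (∫ x, g' f j x ∂Measure.pi μ) ≤ 0) ∧
        (∀ i j, Integrable (g f i j) (μ i) ∧ (∫ x, g f i j x ∂μ i) ≤ 0) ∧
        v = ∫⁻ x, r f x ∂Measure.pi μ} =
    sSup {v : ℝ≥0∞ | ∃ f ∈ G, ∃ μ : ∀ i, Measure (X i),
        (∀ i, IsProbabilityMeasure (μ i)) ∧
        (∀ j, Integrable (g' f j) (Measure.pi μ) ∧
          (∫ x, g' f j x ∂Measure.pi μ) ≤ 0) ∧
        (∀ i j, Integrable (g f i j) (μ i) ∧ (∫ x, g f i j x ∂μ i) ≤ 0) ∧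
        (∀ i, DiracComb (n' + n i) (μ i)) ∧
        v = ∫⁻ x, r f x ∂Measure.pi μ} := by
  apply le_antisymm
  · refine sSup_le ?_
    rintro v ⟨f, hf, μ, hprob, hglob, hmarg, rfl⟩
    refine le_of_forall_lt fun c hc => ?_
    obtain ⟨μ', ⟨hp, hg1, hm1⟩, hD, hc'⟩ := exists_replace_marginals (hg' f hf) (hr f hf)
      (H := g f) ⟨hprob, hglob, hmarg⟩ hc Finset.univ
    exact hc'.trans_le (le_sSup
      ⟨f, hf, μ', hp, hg1, hm1, fun i => hD i (Finset.mem_univ i), rfl⟩)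
  · refine sSup_le_sSup ?_
    rintro v ⟨f, hf, μ, hprob, hglob, hmarg, -, hv⟩
    exact ⟨f, hf, μ, hprob, hglob, hmarg, hv⟩
end

section
/- Let X₁, …, X_m be nonempty Polish spaces with their Borel σ-algebras, X = X₁ × ⋯ × X_m with the product σ-algebra, let G be a set of measurable functions f : X → ℝ, let g₁, …, g_n : ℝ → ℝ be measurable, and let r : ℝ → [0, +∞] be measurable. Define A := { (f, μ) : f ∈ G, μ = μ₁ ⊗ ⋯ ⊗ μ_m a product of Borel probability measures on X such that each g_j ∘ f is μ-integrable and ∫ (g_j ∘ f) dμ ≤ 0 for j = 1, …, n }. Let N := {0, …, n} and D := N^m. For f ∈ G and points x_i^0, …, x_i^n ∈ X_i (i = 1, …, m), the evaluation of f at these points is the function h : D → ℝ defined by h(i₁, …, i_m) := f(x₁^{i₁}, …, x_m^{i_m}). Suppose G_D is a set of real-valued functions on D equal to the set of all such evaluations of elements of G, over all f ∈ G and all choices of points x_i^0, …, x_i^n ∈ X_i. Define A_D := { (h, α) : h ∈ G_D, α = α₁ ⊗ ⋯ ⊗ α_m a product of probability measures on D = N^m, with E_α[g_j ∘ h] ≤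 0 for j = 1, …, n }. Then sup_{(f,μ) ∈ A} ∫ (r ∘ f) dμ = sup_{(h,α) ∈ A_D} E_α[r ∘ h]. -/
/-!
Each marginal of the product measure is replaced, one coordinate at a time, by a measure carried by
at most `n + 1` points, keeping the `n` constraint integrals and not decreasing the objective.

For a single coordinate `i`, Fubini turns the integrals of the constraints and of the objective into
integrals over `X i` of partial integrals, so only finitely many integrable real functions on a
probability space are involved. Their vector of integrals lies in the convex hull (not merely the
closed convex hull) of the values on any set of full measure: otherwise a nonzero linear functional
is nonnegative on all values, has integral zero, hence vanishes almost surely, and one concludes by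
induction on the dimension (`zero_mem_convexHull_of_integral_eq_zero`). This gives a finitely
supported measure with the same integrals. While its support has more than `n + 1` points there is
a linear relation among the vectors `(1, constraints)`; moving along it, in the direction in which
the objective does not decrease, until a weight vanishes shrinks the support
(`exists_small_support`).

A product of measures carried by points `x_i^0, …, x_i^n` is the image of a product measure on
`D = {0, …, n}^m` under the evaluation map, so both suprema can be compared. The objective may be
infinite or non-integrable; it is first truncated at `N : ℕ`, and monotone convergence removes the
truncation. The topology of the factors plays no role.
-/

open MeasureTheory
open scoped ENNReal

/-! ### Integrals as exact convex combinations -/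

/-- In finite dimension, a set whose convex hull misses the origin lies in a closed half-space
through the origin. No closedness of the hull is required: strict separation from the hulls of
finite subsets gives unit functionals, and the unit sphere of the dual is compact. -/
lemma exists_nonneg_functional {V : Type*} [NormedAddCommGroup V] [NormedSpace ℝ V]
    [FiniteDimensional ℝ V] {s : Set V} (h0 : (0 : V) ∉ convexHull ℝ s) (hV : Nontrivial V) :
    ∃ l : StrongDual ℝ V, l ≠ 0 ∧ ∀ x ∈ s, 0 ≤ l x := by
  have : ProperSpace (StrongDual ℝ V) := FiniteDimensional.proper ℝ _
  have hc : IsCompact (Metric.sphere (0 : StrongDual ℝ V) 1) := isCompact_sphere _ _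
  obtain ⟨l, hl, hl'⟩ := hc.inter_iInter_nonempty
    (fun x : s => {l : StrongDual ℝ V | 0 ≤ l x.1})
    (fun x => isClosed_le continuous_const (by fun_prop)) (by
      intro u
      have hfin : (Subtype.val '' (u : Set s)).Finite := u.finite_toSet.image _
      have hsub : Subtype.val '' (u : Set s) ⊆ s := by rintro _ ⟨x, _, rfl⟩; exact x.2
      obtain ⟨f, a, hfa, hf⟩ := geometric_hahn_banach_point_closed
        (convex_convexHull ℝ (Subtype.val '' (u : Set s)))
        (hfin.isCompact_convexHull ℝ).isClosed (fun h => h0 (convexHull_mono hsub h))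
      rw [map_zero] at hfa
      rcases u.eq_empty_or_nonempty with rfl | ⟨x, hx⟩
      · obtain ⟨l, hl⟩ := exists_norm_eq (StrongDual ℝ V) (zero_le_one (α := ℝ))
        exact ⟨l, by simpa using hl, by simp⟩
      · have hpos : ∀ y ∈ u, 0 < f y.1 := fun y hy =>
          hfa.trans (hf _ (subset_convexHull ℝ _ ⟨y, hy, rfl⟩))
        have hf0 : f ≠ 0 := by
          rintro rfl
          simpa using hpos x hx
        refine ⟨‖f‖⁻¹ • f, ?_, ?_⟩
        · simp [norm_smul, hf0]
        · simp only [Set.mem_iInter]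
          intro y hy
          exact mul_nonneg (by positivity) (hpos y hy).le)
  refine ⟨l, ?_, fun x hx => by simpa using Set.mem_iInter.1 hl' ⟨x, hx⟩⟩
  rintro rfl
  simp at hl

/-- A centred integrable random vector has the origin in the exact convex hull of its values on any
set `S` of full measure. -/
lemma zero_mem_convexHull_of_integral_eq_zero_s5 {Y : Type*} [MeasurableSpace Y] (μ : Measure Y)
    [IsProbabilityMeasure μ] (k : ℕ) :
    ∀ (V : Type) [NormedAddCommGroup V] [NormedSpace ℝ V] [FiniteDimensional ℝ V]
      (F : Y → V) (S : Set Y), Module.finrank ℝ V = k → Integrable F μ → (∀ᵐ y ∂μ, y ∈ S) →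
      ∫ y, F y ∂μ = 0 → (0 : V) ∈ convexHull ℝ (F '' S) := by
  induction k using Nat.strong_induction_on with
  | _ k ih =>
  intro V _ _ _ F S hk hF hS h0
  by_contra hcon
  rcases subsingleton_or_nontrivial V with hV | hV
  · obtain ⟨y, hy⟩ := hS.exists
    exact hcon (subset_convexHull ℝ _ ⟨y, hy, Subsingleton.elim _ _⟩)
  obtain ⟨l, hl0, hl⟩ := exists_nonneg_functional hcon hV
  have hFint : ∫ y, l (F y) ∂μ = 0 := by
    rw [l.integral_comp_comm hF, h0, map_zero]
  have hae : (fun y => l (F y)) =ᵐ[μ] 0 := by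
    refine (integral_eq_zero_iff_of_nonneg_ae ?_ (l.integrable_comp hF)).1 hFint
    filter_upwards [hS] with y hy using hl _ ⟨y, hy, rfl⟩
  -- `F` takes values in the proper subspace `ker l` almost surely; a linear retraction onto it
  -- allows the induction hypothesis to be applied there.
  let W : Submodule ℝ V := l.toLinearMap.ker
  have hW : W ≠ ⊤ := by
    intro h
    apply hl0
    ext x
    have : x ∈ W := h ▸ Submodule.mem_top
    exact this
  obtain ⟨q, hq⟩ := W.subtype.exists_leftInverse_of_injective W.ker_subtype
  let Q : V →L[ℝ] W := LinearMap.toContinuousLinearMap q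
  have hQ : ∀ v ∈ W, ((Q v : W) : V) = v := fun v hv =>
    congrArg Subtype.val (LinearMap.congr_fun hq ⟨v, hv⟩)
  have key := ih _ (hk ▸ Submodule.finrank_lt hW) W (fun y => Q (F y)) {y ∈ S | l (F y) = 0}
    rfl (Q.integrable_comp hF) (by filter_upwards [hS, hae] with y h1 h2 using ⟨h1, h2⟩)
    (by rw [Q.integral_comp_comm hF, h0, map_zero])
  apply hcon
  have h1 : (0 : V) ∈ W.subtype '' convexHull ℝ ((fun y => Q (F y)) '' {y ∈ S | l (F y) = 0}) :=
    ⟨0, key, rfl⟩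
  rw [LinearMap.image_convexHull] at h1
  refine convexHull_mono ?_ h1
  rintro _ ⟨_, ⟨y, ⟨hy, hy0⟩, rfl⟩, rfl⟩
  exact ⟨y, hy, (hQ _ hy0).symm⟩

/-- Finitely many integrals against a probability measure are reproduced exactly by a finitely
supported probability with atoms in a prescribed set of full measure. -/
lemma exists_finite_weights {Y : Type*} [MeasurableSpace Y] (μ : Measure Y)
    [IsProbabilityMeasure μ] {κ : Type} [Fintype κ] (F : κ → Y → ℝ) (hF : ∀ o, Integrable (F o) μ)
    (S : Set Y) (hS : ∀ᵐ y ∂μ, y ∈ S) :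
    ∃ (ι : Type) (_ : Fintype ι) (w : ι → ℝ) (y : ι → Y), (∀ i, 0 ≤ w i) ∧ ∑ i, w i = 1 ∧
      (∀ i, y i ∈ S) ∧ ∀ o, ∑ i, w i * F o (y i) = ∫ y, F o y ∂μ := by
  have h := zero_mem_convexHull_of_integral_eq_zero_s5 μ _ (κ → ℝ)
    (fun y o => F o y - ∫ y, F o y ∂μ) S rfl
    (Integrable.of_eval fun o => (hF o).sub (integrable_const _)) hS
    (by
      ext o
      refine (eval_integral (fun o => (hF o).sub (integrable_const _)) o).trans ?_
      simp [integral_sub (hF o) (integrable_const _)])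
  rw [mem_convexHull_iff_exists_fintype] at h
  obtain ⟨ι, hι, w, z, hw, hw1, hz, hsum⟩ := h
  choose y hy hyz using hz
  refine ⟨ι, hι, w, y, hw, hw1, hy, fun o => ?_⟩
  have := congrFun hsum o
  simp only [← hyz, Finset.sum_apply, Pi.smul_apply, smul_eq_mul, mul_sub,
    Finset.sum_sub_distrib, ← Finset.sum_mul, hw1, one_mul, Pi.zero_apply] at this
  linarith

/-! ### Reduction to `n + 1` atoms -/

/-- Among probability weights with given values of `n` linear functionals, a linear objective can be
improved while reducing the support to at most `n + 1` points. `N` is the size of the initial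
support, on which the proof is by strong induction. -/
lemma exists_small_support_s5 {ι : Type*} [Fintype ι] {n : ℕ} (a : Fin n → ι → ℝ) (b : ι → ℝ)
    (N : ℕ) : ∀ w : ι → ℝ, (Finset.univ.filter fun i => w i ≠ 0).card = N → (∀ i, 0 ≤ w i) →
    ∑ i, w i = 1 →
    ∃ w' : ι → ℝ, (Finset.univ.filter fun i => w' i ≠ 0).card ≤ n + 1 ∧ (∀ i, 0 ≤ w' i) ∧
      ∑ i, w' i = 1 ∧ (∀ j, ∑ i, w' i * a j i = ∑ i, w i * a j i) ∧
      ∑ i, w i * b i ≤ ∑ i, w' i * b i := by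
  classical
  induction N using Nat.strong_induction_on with
  | _ N ih =>
  intro w hN hw hw1
  by_cases hle : N ≤ n + 1
  · exact ⟨w, hN ▸ hle, hw, hw1, fun _ => rfl, le_rfl⟩
  set T := Finset.univ.filter fun i => w i ≠ 0 with hT
  obtain ⟨c, hc0, hcT, hc1, hca, hcb⟩ : ∃ c : ι → ℝ, c ≠ 0 ∧ (∀ i, i ∉ T → c i = 0) ∧
      ∑ i, c i = 0 ∧ (∀ j, ∑ i, c i * a j i = 0) ∧ 0 ≤ ∑ i, c i * b i := by
    -- More than `n + 1` vectors in a space of dimension `n + 1`; the first coordinate makes the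
    -- coefficients of the relation sum to zero.
    have hdep : ¬ LinearIndependent ℝ
        (fun (i : T) => ((1 : ℝ), fun j => a j i) : T → ℝ × (Fin n → ℝ)) := by
      intro h
      have := h.fintype_card_le_finrank
      simp at this
      omega
    obtain ⟨e, he, i0, hi0⟩ := Fintype.not_linearIndependent_iff.1 hdep
    let c : ι → ℝ := fun i => if h : i ∈ T then e ⟨i, h⟩ else 0
    have hsum : ∀ φ : ι → ℝ, ∑ i, c i * φ i = ∑ i : T, e i * φ i := by
      intro φ
      rw [← Finset.sum_subset (Finset.subset_univ T), ← Finset.sum_attach]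
      · exact Finset.sum_congr rfl fun i _ => by simp [c, i.2]
      · intro i _ hi
        simp [c, hi]
    have h1 : ∑ i, c i = 0 := by
      have := congrArg Prod.fst he
      simpa [Prod.fst_sum] using (hsum fun _ => 1).trans (by simpa [Prod.fst_sum] using this)
    have h2 : ∀ j, ∑ i, c i * a j i = 0 := by
      intro j
      have := congrFun (congrArg Prod.snd he) j
      rw [hsum]
      simpa [Prod.snd_sum] using this
    have h3 : c ≠ 0 := fun h => hi0 (by simpa [c] using congrFun h i0.1)
    have h4 : ∀ i, i ∉ T → c i = 0 := fun i hi => by simp [c, hi]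
    rcases le_total 0 (∑ i, c i * b i) with h | h
    · exact ⟨c, h3, h4, h1, h2, h⟩
    · refine ⟨-c, by simpa using h3, fun i hi => by simp [h4 i hi], by simp [h1], fun j => ?_, ?_⟩
      · simp [h2 j]
      · simpa using h
  have hneg : (Finset.univ.filter fun i => c i < 0).Nonempty := by
    by_contra hne
    rw [Finset.not_nonempty_iff_eq_empty, Finset.filter_eq_empty_iff] at hne
    apply hc0
    ext i
    exact (Finset.sum_eq_zero_iff_of_nonneg fun i hi => not_lt.1 (hne hi)).1 hc1 i
      (Finset.mem_univ i)
  -- `t` is the first time at which a weight of `w + t • c` reaches zero.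
  obtain ⟨i0, hi0, hmin⟩ := Finset.exists_min_image _ (fun i => w i / -c i) hneg
  have hci0 : c i0 < 0 := (Finset.mem_filter.1 hi0).2
  set t := w i0 / -c i0 with ht
  have ht0 : 0 ≤ t := div_nonneg (hw _) (by linarith)
  have hsum : ∀ φ : ι → ℝ, ∑ i, (w i + t * c i) * φ i = ∑ i, w i * φ i + t * ∑ i, c i * φ i := by
    intro φ
    rw [Finset.mul_sum, ← Finset.sum_add_distrib]
    exact Finset.sum_congr rfl fun i _ => by ring
  have hnn : ∀ i, 0 ≤ w i + t * c i := by
    intro i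
    rcases lt_or_ge (c i) 0 with h | h
    · have := hmin i (by simp [h])
      rw [le_div_iff₀ (by linarith)] at this
      linarith
    · have := hw i
      positivity
  have hi0T : i0 ∈ T := by
    by_contra h
    exact hci0.ne (hcT _ h)
  have hss : (Finset.univ.filter fun i => w i + t * c i ≠ 0) ⊂ T := by
    rw [Finset.ssubset_iff_of_subset]
    · refine ⟨i0, hi0T, ?_⟩
      have h : w i0 + t * c i0 = 0 := by
        rw [ht, div_neg, neg_mul, div_mul_cancel₀ _ hci0.ne, add_neg_cancel]
      simp [h]
    · intro i hi
      by_contra h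
      have hwi : w i = 0 := by simpa [hT] using h
      simp [hwi, hcT i h] at hi
  obtain ⟨w', h1, h2, h3, h4, h5⟩ := ih _ (hN ▸ Finset.card_lt_card hss) (fun i => w i + t * c i)
    rfl hnn (by simpa [hw1, hc1] using hsum fun _ => 1)
  refine ⟨w', h1, h2, h3, fun j => ?_, ?_⟩
  · rw [h4, hsum, hca, mul_zero, add_zero]
  · rw [hsum] at h5
    have : 0 ≤ t * ∑ i, c i * b i := mul_nonneg ht0 hcb
    linarith

/-- One-coordinate reduction: the `n` integrals indexed by `some j` are kept and the one indexed by
`none` does not decrease. Repeated atoms are allowed, so exactly `n + 1` points are listed. -/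
lemma exists_discrete {Y : Type*} [MeasurableSpace Y] (μ : Measure Y)
    [IsProbabilityMeasure μ] {n : ℕ} (F : Option (Fin n) → Y → ℝ)
    (hF : ∀ o, Integrable (F o) μ) (S : Set Y) (hS : ∀ᵐ y ∂μ, y ∈ S) :
    ∃ (α : Measure (Fin (n + 1))) (y : Fin (n + 1) → Y), IsProbabilityMeasure α ∧
      (∀ k, y k ∈ S) ∧ (∀ j, ∫ k, F (some j) (y k) ∂α = ∫ y, F (some j) y ∂μ) ∧
      ∫ y, F none y ∂μ ≤ ∫ k, F none (y k) ∂α := by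
  classical
  obtain ⟨ι, _, w₀, y₀, hw₀, hw₀1, hy₀, hI⟩ := exists_finite_weights μ F hF S hS
  obtain ⟨w, hcard, hw, hw1, ha, hb⟩ := exists_small_support_s5 (fun j i => F (some j) (y₀ i))
    (fun i => F none (y₀ i)) _ w₀ rfl hw₀ hw₀1
  obtain ⟨s, hs⟩ := hS.exists
  set T := Finset.univ.filter fun i => w i ≠ 0 with hT
  obtain ⟨e⟩ : Nonempty (T ↪ Fin (n + 1)) :=
    Function.Embedding.nonempty_of_card_le (by simpa using hcard)
  let v : Fin (n + 1) → ℝ := Function.extend e (fun i : T => w i) 0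
  let y : Fin (n + 1) → Y := Function.extend e (fun i : T => y₀ i) fun _ => s
  have hsum : ∀ φ : Y → ℝ, ∑ k, v k * φ (y k) = ∑ i, w i * φ (y₀ i) := by
    intro φ
    rw [← Finset.sum_subset (Finset.subset_univ T), ← Finset.sum_attach T]
    · refine (Fintype.sum_of_injective e e.injective (fun i : T => w i * φ (y₀ i))
        (fun k => v k * φ (y k)) (fun k hk => ?_) fun i => ?_).symm
      · simp only [v]
        rw [Function.extend_apply' _ _ _ hk]
        simp
      · simp only [v, y, e.injective.extend_apply]
    · intro i _ hi
      have : w i = 0 := by simpa [hT] using hi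
      simp [this]
  have hv : ∀ k, 0 ≤ v k := by
    intro k
    by_cases hk : ∃ i, e i = k
    · obtain ⟨i, rfl⟩ := hk
      simp only [v, e.injective.extend_apply, hw]
    · simp only [v, Function.extend_apply' _ _ _ hk, Pi.zero_apply, le_refl]
  have hv1 : ∑ k, v k = 1 := by simpa [hw1] using hsum fun _ => 1
  let p : PMF (Fin (n + 1)) := PMF.ofFintype (fun k => ENNReal.ofReal (v k)) (by
    rw [← ENNReal.ofReal_sum_of_nonneg fun k _ => hv k, hv1, ENNReal.ofReal_one])
  have hFint : ∀ φ : Y → ℝ, ∫ k, φ (y k) ∂p.toMeasure = ∑ i, w i * φ (y₀ i) := by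
    intro φ
    rw [PMF.integral_eq_sum, ← hsum]
    exact Finset.sum_congr rfl fun k _ => by simp [p, ENNReal.toReal_ofReal (hv k)]
  refine ⟨p.toMeasure, y, inferInstance, fun k => ?_, fun j => ?_, ?_⟩
  · by_cases hk : ∃ i, e i = k
    · obtain ⟨i, rfl⟩ := hk
      simp only [y, e.injective.extend_apply, hy₀]
    · simp only [y, Function.extend_apply' _ _ _ hk, hs]
  · rw [hFint, ha, hI]
  · rw [hFint, ← hI]
    exact hb

/-! ### Replacing the marginals of a product measure -/

/-- Replacing the `i`-th marginal amounts to resampling the `i`-th coordinate independently. -/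
lemma pi_update_map {m : ℕ} {X : Fin m → Type*} [∀ i, MeasurableSpace (X i)]
    (μ : ∀ i, Measure (X i)) [∀ i, IsProbabilityMeasure (μ i)] (i : Fin m)
    {β : Type*} [MeasurableSpace β] (α : Measure β) [IsProbabilityMeasure α]
    (y : β → X i) (hy : Measurable y) :
    Measure.pi (Function.update μ i (α.map y)) =
      ((Measure.pi μ).prod α).map fun p => Function.update p.1 i (y p.2) := by
  have hα : IsProbabilityMeasure (α.map y) := Measure.isProbabilityMeasure_map hy.aemeasurable
  have hup : ∀ k, IsProbabilityMeasure (Function.update μ i (α.map y) k) := by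
    intro k
    rcases eq_or_ne k i with rfl | h
    · simpa using hα
    · simpa [h] using inferInstanceAs (IsProbabilityMeasure (μ k))
  have hmeas : Measurable fun p : (∀ k, X k) × β => Function.update p.1 i (y p.2) :=
    measurable_update'.comp (measurable_fst.prodMk (hy.comp measurable_snd))
  refine Measure.pi_eq fun s hs => ?_
  rw [Measure.map_apply hmeas (MeasurableSet.univ_pi hs)]
  have hpre : (fun p : (∀ k, X k) × β => Function.update p.1 i (y p.2)) ⁻¹' Set.univ.pi s =
      Set.univ.pi (Function.update s i Set.univ) ×ˢ (y ⁻¹' s i) := by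
    ext ⟨x, b⟩
    simp only [Set.mem_preimage, Set.mem_pi, Set.mem_univ, true_imp_iff, Set.mem_prod]
    constructor
    · intro h
      refine ⟨fun k => ?_, by simpa using h i⟩
      rcases eq_or_ne k i with rfl | hk
      · simp
      · simpa [hk] using h k
    · rintro ⟨h1, h2⟩ k
      rcases eq_or_ne k i with rfl | hk
      · simpa using h2
      · simpa [hk] using h1 k
  rw [hpre, Measure.prod_prod, Measure.pi_pi, ← Finset.mul_prod_erase _ _ (Finset.mem_univ i),
    ← Finset.mul_prod_erase (Finset.univ) (fun k => Function.update μ i (α.map y) k (s k))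
      (Finset.mem_univ i)]
  simp only [Function.update_self, measure_univ, one_mul, Measure.map_apply hy (hs i)]
  rw [mul_comm]
  congr 1
  refine Finset.prod_congr rfl fun k hk => ?_
  simp [Finset.ne_of_mem_erase hk]

/-- The `i`-th marginal of a product measure can be replaced by one carried by `n + 1` points. The
atoms are chosen where all partial integrals converge, which preserves integrability. -/
lemma replace_marginal {m : ℕ} {X : Fin m → Type*} [∀ i, MeasurableSpace (X i)]
    (μ : ∀ i, Measure (X i)) [∀ i, IsProbabilityMeasure (μ i)] (i : Fin m) {n : ℕ}
    (Φ : Option (Fin n) → (∀ i, X i) → ℝ) (hΦm : ∀ o, Measurable (Φ o))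
    (hΦ : ∀ o, Integrable (Φ o) (Measure.pi μ)) :
    ∃ (α : Measure (Fin (n + 1))) (y : Fin (n + 1) → X i), IsProbabilityMeasure α ∧
      (∀ o, Integrable (Φ o) (Measure.pi (Function.update μ i (α.map y)))) ∧
      (∀ j, ∫ x, Φ (some j) x ∂Measure.pi (Function.update μ i (α.map y)) =
        ∫ x, Φ (some j) x ∂Measure.pi μ) ∧
      ∫ x, Φ none x ∂Measure.pi μ ≤
        ∫ x, Φ none x ∂Measure.pi (Function.update μ i (α.map y)) := by
  -- Resampling with the original marginal leaves the product measure unchanged.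
  have hself := pi_update_map μ i (μ i) id measurable_id
  rw [Measure.map_id, Function.update_eq_self] at hself
  have hm0 : Measurable fun p : (∀ k, X k) × X i => Function.update p.1 i p.2 := measurable_update'
  have hFint : ∀ o, Integrable (fun p : (∀ k, X k) × X i => Φ o (Function.update p.1 i p.2))
      ((Measure.pi μ).prod (μ i)) := by
    intro o
    have := hΦ o
    rw [hself] at this
    exact (integrable_map_measure (hΦm o).aestronglyMeasurable hm0.aemeasurable).1 this
  have hval : ∀ o, ∫ x, Φ o x ∂Measure.pi μ =
      ∫ y, ∫ x, Φ o (Function.update x i y) ∂Measure.pi μ ∂μ i := by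
    intro o
    rw [← integral_prod_symm _ (hFint o)]
    conv_lhs => rw [hself]
    exact integral_map hm0.aemeasurable (hΦm o).aestronglyMeasurable
  obtain ⟨α, y, hα, hyS, hj, hn⟩ := exists_discrete (μ i)
    (fun o y => ∫ x, Φ o (Function.update x i y) ∂Measure.pi μ)
    (fun o => (hFint o).integral_prod_right)
    {y | ∀ o, Integrable (fun x => Φ o (Function.update x i y)) (Measure.pi μ)}
    (ae_all_iff.2 fun o => (hFint o).prod_left_ae)
  have hy : Measurable y := measurable_of_countable y
  have hm1 : Measurable fun p : (∀ k, X k) × Fin (n + 1) => Function.update p.1 i (y p.2) :=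
    measurable_update'.comp (measurable_fst.prodMk (hy.comp measurable_snd))
  have hFint' : ∀ o, Integrable
      (fun p : (∀ k, X k) × Fin (n + 1) => Φ o (Function.update p.1 i (y p.2)))
      ((Measure.pi μ).prod α) := fun o =>
    (integrable_prod_iff' ((hΦm o).comp hm1).aestronglyMeasurable).2
      ⟨ae_of_all _ fun k => hyS k o, Integrable.of_finite⟩
  have hval' : ∀ o, ∫ x, Φ o x ∂Measure.pi (Function.update μ i (α.map y)) =
      ∫ k, ∫ x, Φ o (Function.update x i (y k)) ∂Measure.pi μ ∂α := by
    intro o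
    rw [pi_update_map μ i α y hy, ← integral_prod_symm _ (hFint' o)]
    exact integral_map hm1.aemeasurable (hΦm o).aestronglyMeasurable
  refine ⟨α, y, hα, fun o => ?_, fun j => ?_, ?_⟩
  · rw [pi_update_map μ i α y hy]
    exact (integrable_map_measure (hΦm o).aestronglyMeasurable hm1.aemeasurable).2 (hFint' o)
  · rw [hval', hval]
    exact hj j
  · rw [hval', hval]
    exact hn

/-- The replacement of marginals iterated over the coordinates in `s`. -/
lemma replace_marginals {m : ℕ} {X : Fin m → Type*} [∀ i, MeasurableSpace (X i)]
    (μ : ∀ i, Measure (X i)) (hμ : ∀ i, IsProbabilityMeasure (μ i)) {n : ℕ}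
    (Φ : Option (Fin n) → (∀ i, X i) → ℝ) (hΦm : ∀ o, Measurable (Φ o))
    (hΦ : ∀ o, Integrable (Φ o) (Measure.pi μ)) (s : Finset (Fin m)) :
    ∃ ν : ∀ i, Measure (X i), (∀ i, IsProbabilityMeasure (ν i)) ∧
      (∀ i ∈ s, ∃ (α : Measure (Fin (n + 1))) (y : Fin (n + 1) → X i),
        IsProbabilityMeasure α ∧ ν i = α.map y) ∧
      (∀ o, Integrable (Φ o) (Measure.pi ν)) ∧
      (∀ j, ∫ x, Φ (some j) x ∂Measure.pi ν = ∫ x, Φ (some j) x ∂Measure.pi μ) ∧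
      ∫ x, Φ none x ∂Measure.pi μ ≤ ∫ x, Φ none x ∂Measure.pi ν := by
  induction s using Finset.induction_on with
  | empty => exact ⟨μ, hμ, by simp, hΦ, fun _ => rfl, le_rfl⟩
  | insert i s hi ih =>
    obtain ⟨ν, hν, hs, h1, h2, h3⟩ := ih
    obtain ⟨α, y, hα, h1', h2', h3'⟩ := replace_marginal ν i Φ hΦm h1
    refine ⟨Function.update ν i (α.map y), fun k => ?_, fun k hk => ?_, h1',
      fun j => (h2' j).trans (h2 j), h3.trans h3'⟩
    · rcases eq_or_ne k i with rfl | h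
      · simpa using Measure.isProbabilityMeasure_map (measurable_of_countable y).aemeasurable
      · simpa [h] using hν k
    · rcases eq_or_ne k i with rfl | h
      · exact ⟨α, y, hα, by simp⟩
      · simpa [h] using hs k (Finset.mem_of_mem_insert_of_ne hk h)

/-! ### Comparison of the two suprema -/

/-- **Reduction to functions and product measures on a finite discrete space.**
When the quantity of interest `r ∘ f` and all `n` constraints `g_j ∘ f` are
compositions with `f`, the OUQ supremum over pairs `(f, μ)` (with `f` in a class
`G` of measurable functions on a product of Polish spaces and `μ` a product
probability measure) equals the supremum over pairs `(h, α)` where `h` ranges over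
the set `G_D` of evaluations of elements of `G` at arbitrary points
`x_i^0, …, x_i^n ∈ X_i` and `α` ranges over products of probability measures on
`D = {0, …, n}^m`. -/
theorem stmt5 {m : ℕ} (X : Fin m → Type*)
    [∀ i, TopologicalSpace (X i)] [∀ i, PolishSpace (X i)]
    [∀ i, MeasurableSpace (X i)] [∀ i, BorelSpace (X i)] [∀ i, Nonempty (X i)]
    (G : Set ((∀ i, X i) → ℝ)) (hGmeas : ∀ f ∈ G, Measurable f)
    (n : ℕ) (g : Fin n → ℝ → ℝ) (hg : ∀ j, Measurable (g j))
    (r : ℝ → ℝ≥0∞) (hr : Measurable r)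
    (GD : Set ((Fin m → Fin (n + 1)) → ℝ))
    (hGD : GD = {h | ∃ f ∈ G, ∃ x : ∀ i, Fin (n + 1) → X i,
      h = fun κ => f fun i => x i (κ i)}) :
    sSup {v : ℝ≥0∞ | ∃ f ∈ G, ∃ μ : ∀ i, Measure (X i),
        (∀ i, IsProbabilityMeasure (μ i)) ∧
        (∀ j, Integrable (fun x => g j (f x)) (Measure.pi μ) ∧
          (∫ x, g j (f x) ∂Measure.pi μ) ≤ 0) ∧
        v = ∫⁻ x, r (f x) ∂Measure.pi μ} =
    sSup {v : ℝ≥0∞ | ∃ h ∈ GD, ∃ α : Fin m → Measure (Fin (n + 1)),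
        (∀ i, IsProbabilityMeasure (α i)) ∧
        (∀ j, (∫ κ, g j (h κ) ∂Measure.pi α) ≤ 0) ∧
        v = ∫⁻ κ, r (h κ) ∂Measure.pi α} := by
  classical
  subst hGD
  apply le_antisymm
  · refine sSup_le ?_
    rintro _ ⟨f, hf, μ, hμ, hc, rfl⟩
    have hfm := hGmeas f hf
    have hsup : ∫⁻ x, r (f x) ∂Measure.pi μ =
        ⨆ N : ℕ, ∫⁻ x, min (r (f x)) N ∂Measure.pi μ := by
      rw [← lintegral_iSup]
      · refine lintegral_congr fun x => ?_
        rw [← inf_iSup_eq, ENNReal.iSup_natCast, inf_top_eq]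
      · exact fun N => (hr.comp hfm).min measurable_const
      · intro N M hNM x
        exact min_le_min_left _ (by exact_mod_cast hNM)
    -- It suffices to bound the truncated objectives, which are bounded, hence integrable.
    rw [hsup]
    refine iSup_le fun N => ?_
    have hfin : ∀ x, min (r (f x)) (N : ℝ≥0∞) ≠ ∞ := fun x =>
      ((min_le_right _ _).trans_lt (ENNReal.natCast_lt_top N)).ne
    let Φ : Option (Fin n) → (∀ i, X i) → ℝ := fun o x =>
      o.elim (min (r (f x)) (N : ℝ≥0∞)).toReal fun j => g j (f x)
    have hψm : Measurable fun x => (min (r (f x)) (N : ℝ≥0∞)).toReal :=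
      ((hr.comp hfm).min measurable_const).ennreal_toReal
    have hΦm : ∀ o, Measurable (Φ o) := by
      rintro (_ | j)
      · exact hψm
      · exact (hg j).comp hfm
    have hΦ : ∀ o, Integrable (Φ o) (Measure.pi μ) := by
      rintro (_ | j)
      · refine Integrable.of_bound hψm.aestronglyMeasurable (N : ℝ) (ae_of_all _ fun x => ?_)
        refine (Real.norm_of_nonneg ENNReal.toReal_nonneg).trans_le ?_
        exact ENNReal.toReal_le_of_le_ofReal (Nat.cast_nonneg N) (by simp)
      · exact (hc j).1
    obtain ⟨ν, hν, hdisc, h1, h2, h3⟩ := replace_marginals μ hμ Φ hΦm hΦ Finset.univ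
    choose α y hα hνα using fun i => hdisc i (Finset.mem_univ i)
    have hy : ∀ i, Measurable (y i) := fun i => measurable_of_countable _
    have hpi : Measure.pi ν = (Measure.pi α).map fun κ i => y i (κ i) := by
      rw [Measure.pi_map_pi fun i => (hy i).aemeasurable]
      exact congrArg Measure.pi (funext hνα)
    have hym : Measurable fun (κ : Fin m → Fin (n + 1)) i => y i (κ i) := measurable_of_countable _
    have hof : ∀ (ρ : Measure (∀ i, X i)), Integrable (Φ none) ρ →
        ∫⁻ x, min (r (f x)) N ∂ρ = ENNReal.ofReal (∫ x, Φ none x ∂ρ) := by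
      intro ρ hρ
      rw [ofReal_integral_eq_lintegral_ofReal hρ (ae_of_all _ fun x => ENNReal.toReal_nonneg)]
      exact lintegral_congr fun x => (ENNReal.ofReal_toReal (hfin x)).symm
    calc ∫⁻ x, min (r (f x)) N ∂Measure.pi μ
        ≤ ∫⁻ x, min (r (f x)) N ∂Measure.pi ν := by
          rw [hof _ (hΦ none), hof _ (h1 none)]
          exact ENNReal.ofReal_le_ofReal h3
      _ ≤ ∫⁻ x, r (f x) ∂Measure.pi ν := lintegral_mono fun x => min_le_left _ _
      _ ≤ _ := by
          refine le_sSup ⟨fun κ => f fun i => y i (κ i), ⟨f, hf, y, rfl⟩, α, hα, fun j => ?_, ?_⟩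
          · have h := (h2 j).trans_le (hc j).2
            rw [hpi, integral_map hym.aemeasurable (hΦm _).aestronglyMeasurable] at h
            exact h
          · rw [hpi]
            exact lintegral_map (hr.comp hfm) hym
  · refine sSup_le_sSup ?_
    rintro _ ⟨_, ⟨f, hf, y, rfl⟩, α, hα, hc, rfl⟩
    have hfm := hGmeas f hf
    have hy : ∀ i, Measurable (y i) := fun i => measurable_of_countable _
    have hprob : ∀ i, IsProbabilityMeasure ((α i).map (y i)) := fun i =>
      Measure.isProbabilityMeasure_map (hy i).aemeasurable
    have hpi := Measure.pi_map_pi (μ := α) fun i => (hy i).aemeasurable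
    have hym : Measurable fun (κ : Fin m → Fin (n + 1)) i => y i (κ i) := measurable_of_countable _
    refine ⟨f, hf, fun i => (α i).map (y i), hprob, fun j => ?_, ?_⟩
    · have hgm : Measurable fun x => g j (f x) := (hg j).comp hfm
      rw [← hpi, integrable_map_measure hgm.aestronglyMeasurable hym.aemeasurable,
        integral_map hym.aemeasurable hgm.aestronglyMeasurable]
      exact ⟨Integrable.of_finite, hc j⟩
    · rw [← hpi]
      exact (lintegral_map (hr.comp hfm) hym).symm
end

section
/- Let X₁, …, X_m be nonempty Polish spaces, each containing at least two points, with their Borel σ-algebras, and let X = X₁ × ⋯ × X_m carry the product σ-algebra. Let D₁, …, D_m ≥ 0 and a ∈ ℝ. Define U(A_McD) as the supremum, over all pairs (f, μ) where f : X → ℝ is measurable with Osc_i(f) ≤ D_i for each i, μ = μ₁ ⊗ ⋯ ⊗ μ_m is a product of Borel probability measures on X, and E_μ[f] ≤ 0, of μ({x : f(x) ≥ a}). Define U(A_D) as the supremum, over all pairs (h, α) where h : {0,1}^m → ℝ satisfies |h(s) − h(s')| ≤ D_k whenever s, s' ∈ {0,1}^m differ only in coordinate k, α = α₁ ⊗ ⋯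 ⊗ α_m is a product of probability measures on {0,1}^m, and E_α[h] ≤ 0, of α({s : h(s) ≥ a}). Then U(A_McD) = U(A_D). -/
/-!
The hypercube problem embeds into the problem on `X`: choosing two distinct points in each `X i`
embeds the hypercube in `X`, with a measurable coordinatewise left inverse along which `h` is
pulled back, while the measures are pushed forward.

Conversely, fix `f`. With all factors of the product measure but one held fixed, both `E[f]` and
the probability of `{a ≤ f}` are linear functionals of the remaining factor. Maximizing one linear
functional of a probability measure under one linear inequality constraint needs only measures
with two atoms (`exists_two_point`), so the factors can be replaced one after the other by
two-point measures without lowering the probability (`exists_update_isTwoPoint`,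
`exists_isTwoPoint_pi`). A product of two-point measures is the image of a product measure on the
hypercube, and composing `f` with the corresponding map gives an admissible `h`.
-/

open MeasureTheory
open scoped ENNReal

theorem integral_pos_of_ae_pos {Ω : Type*} [MeasurableSpace Ω] {ν : Measure Ω}
    [IsProbabilityMeasure ν] {g : Ω → ℝ} (hg : Integrable g ν) (h : ∀ᵐ y ∂ν, 0 < g y) :
    0 < ∫ y, g y ∂ν := by
  have h0 : 0 ≤ᵐ[ν] g := h.mono fun _ hy => hy.le
  refine lt_of_le_of_ne (integral_nonneg_of_ae h0) fun he => ?_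
  have hz := (integral_eq_zero_iff_of_nonneg_ae h0 hg).1 he.symm
  obtain ⟨y, hy, hy'⟩ := (h.and hz).exists
  exact hy.ne' hy'

/-- The one-dimensional reduction: if some probability measure satisfies both `∫ g ≤ 0` and
`0 ≤ ∫ q`, then so does a measure supported on two points. If no two-point measure did so, then `q ≤ c g` pointwise for some multiplier `c ≥ 0`, which forces
`q = c g` almost everywhere, and such points again yield a two-point measure. -/
theorem exists_two_point {Ω : Type*} [MeasurableSpace Ω] (ν : Measure Ω)
    [IsProbabilityMeasure ν] {g q : Ω → ℝ} (hg : Integrable g ν) (hq : Integrable q ν)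
    (hg0 : ∫ y, g y ∂ν ≤ 0) (hq0 : 0 ≤ ∫ y, q y ∂ν) :
    ∃ (y₀ y₁ : Ω) (t : ℝ), 0 ≤ t ∧ t ≤ 1 ∧
      (1 - t) * g y₀ + t * g y₁ ≤ 0 ∧ 0 ≤ (1 - t) * q y₀ + t * q y₁ := by
  by_contra! H
  have H1 : ∀ y, g y ≤ 0 → q y < 0 := fun y hy => by
    simpa using H y y 0 le_rfl zero_le_one (by simpa using hy)
  have H2 : ∀ y₀ y₁, 0 < g y₀ → g y₁ ≤ 0 → g y₀ * q y₁ < g y₁ * q y₀ := by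
    intro y₀ y₁ h0 h1
    have hd : 0 < g y₀ - g y₁ := by linarith
    -- the weight at which the two-point mean of `g` vanishes
    have := H y₀ y₁ (g y₀ / (g y₀ - g y₁)) (by positivity)
      ((div_le_one hd).2 (by linarith)) (le_of_eq (by field_simp; ring))
    have e : (1 - g y₀ / (g y₀ - g y₁)) * q y₀ + g y₀ / (g y₀ - g y₁) * q y₁
        = (g y₀ * q y₁ - g y₁ * q y₀) / (g y₀ - g y₁) := by field_simp; ring
    rw [e, div_neg_iff] at this
    rcases this with h | h <;> linarith [h.1, h.2]
  have hqneg : ¬ ∀ᵐ y ∂ν, g y ≤ 0 := fun h => by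
    have := integral_pos_of_ae_pos hq.neg (h.mono fun y hy => by simpa using H1 y hy)
    simp only [Pi.neg_apply, integral_neg] at this
    linarith
  have hgpos : ¬ ∀ᵐ y ∂ν, 0 < g y := fun h => by
    linarith [integral_pos_of_ae_pos hg h]
  obtain ⟨z, hz⟩ : ∃ z, g z < 0 := by
    by_contra! hn
    have h0 : 0 ≤ᵐ[ν] g := .of_forall hn
    have := (integral_eq_zero_iff_of_nonneg_ae h0 hg).1 (hg0.antisymm (integral_nonneg_of_ae h0))
    exact hqneg (this.mono fun y hy => hy.le)
  set S : Set ℝ := insert 0 ((fun y => q y / g y) '' {y | 0 < g y}) with hS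
  have hub : ∀ y, g y < 0 → q y / g y ∈ upperBounds S := by
    rintro y hy r (rfl | ⟨x, hx, rfl⟩)
    · exact (div_pos_of_neg_of_neg (H1 y hy.le) hy).le
    · have hx' : 0 < g x := hx
      have := H2 x y hx' hy.le
      show q x / g x ≤ q y / g y
      rw [le_div_iff_of_neg hy, div_mul_eq_mul_div, le_div_iff₀ hx']
      linarith
  have hbdd : BddAbove S := ⟨_, hub z hz⟩
  set c := sSup S
  have hc0 : 0 ≤ c := le_csSup hbdd (Set.mem_insert _ _)
  have hle : ∀ y, q y ≤ c * g y := by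
    intro y
    rcases lt_trichotomy (g y) 0 with h | h | h
    · exact (le_div_iff_of_neg h).1 (csSup_le ⟨0, Set.mem_insert _ _⟩ (hub y h))
    · simpa [h] using (H1 y h.le).le
    · exact (div_le_iff₀ h).1 (le_csSup hbdd (Set.mem_insert_of_mem _ ⟨y, h, rfl⟩))
  have hae : ∀ᵐ y ∂ν, c * g y - q y = 0 := by
    have hn : 0 ≤ᵐ[ν] fun y => c * g y - q y := .of_forall fun y => sub_nonneg.2 (hle y)
    refine (integral_eq_zero_iff_of_nonneg_ae hn ((hg.const_mul c).sub hq)).1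
      (le_antisymm ?_ (integral_nonneg_of_ae hn))
    rw [integral_sub (hg.const_mul c) hq, integral_const_mul]
    linarith [mul_nonpos_of_nonneg_of_nonpos hc0 hg0]
  obtain ⟨x, hx, hxc⟩ : ∃ x, 0 < g x ∧ c * g x - q x = 0 := by
    by_contra! h
    exact hqneg (hae.mono fun y hy => not_lt.1 fun hp => h y hp hy)
  obtain ⟨y, hy, hyc⟩ : ∃ y, g y ≤ 0 ∧ c * g y - q y = 0 := by
    by_contra! h
    exact hgpos (hae.mono fun y hy => not_le.1 fun hp => h y hp hy)
  have := H2 x y hx hy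
  rw [← sub_eq_zero.1 hxc, ← sub_eq_zero.1 hyc] at this
  linarith

section Product

variable {m : ℕ} {X : Fin m → Type*} [∀ i, MeasurableSpace (X i)]

theorem measurable_update_prod (i : Fin m) :
    Measurable fun z : X i × (∀ j, X j) => Function.update z.2 i z.1 := by
  refine measurable_pi_lambda _ fun j => ?_
  by_cases h : j = i
  · subst h; simpa using measurable_fst
  · simp only [Function.update_of_ne h]
    exact (measurable_pi_apply j).comp measurable_snd

/-- Resampling the `i`-th coordinate from `ν` turns `Measure.pi μ` into the product measure
whose `i`-th factor is `ν`. -/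
theorem map_update_prod (μ : ∀ i, Measure (X i)) [∀ i, IsProbabilityMeasure (μ i)]
    (i : Fin m) (ν : Measure (X i)) [IsProbabilityMeasure ν]
    [∀ j, IsProbabilityMeasure (Function.update μ i ν j)] :
    (ν.prod (Measure.pi μ)).map (fun z => Function.update z.2 i z.1)
      = Measure.pi (Function.update μ i ν) := by
  refine (Measure.pi_eq fun s hs => ?_).symm
  rw [Measure.map_apply (measurable_update_prod i) (MeasurableSet.univ_pi hs)]
  have : (fun z : X i × (∀ j, X j) => Function.update z.2 i z.1) ⁻¹' Set.univ.pi s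
      = s i ×ˢ Set.univ.pi (Function.update s i Set.univ) := by
    ext ⟨y, x⟩
    simp only [Set.mem_preimage, Set.mem_prod, Set.mem_univ_pi]
    constructor
    · intro h
      refine ⟨by simpa using h i, fun j => ?_⟩
      by_cases hj : j = i
      · subst hj; simp
      · simpa [hj] using h j
    · rintro ⟨h1, h2⟩ j
      by_cases hj : j = i
      · subst hj; simpa using h1
      · simpa [hj] using h2 j
  rw [this, Measure.prod_prod, Measure.pi_pi, ← Finset.mul_prod_erase _ _ (Finset.mem_univ i),
    ← Finset.mul_prod_erase (s := Finset.univ) (a := i)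
      (f := fun j => Function.update μ i ν j (s j)) (Finset.mem_univ i)]
  simp only [Function.update_self, measure_univ, one_mul]
  congr 1
  refine Finset.prod_congr rfl fun j hj => ?_
  have := Finset.ne_of_mem_erase hj
  simp [this]

theorem isProb_update {μ : ∀ i, Measure (X i)} (hμ : ∀ i, IsProbabilityMeasure (μ i))
    (i : Fin m) {ν : Measure (X i)} (hν : IsProbabilityMeasure ν) (j : Fin m) :
    IsProbabilityMeasure (Function.update μ i ν j) := by
  by_cases h : j = i
  · subst h; simpa using hν
  · simpa [h] using hμ j

theorem integrable_update {μ : ∀ i, Measure (X i)} [∀ i, IsProbabilityMeasure (μ i)]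
    {f : (∀ i, X i) → ℝ} (hf : Measurable f) {C : ℝ} (i : Fin m)
    (hosc : ∀ (x : ∀ i, X i) (y : X i), |f x - f (Function.update x i y)| ≤ C)
    (hint : Integrable f (Measure.pi μ)) (ν : Measure (X i)) [IsProbabilityMeasure ν] :
    Integrable (fun z : X i × (∀ j, X j) => f (Function.update z.2 i z.1))
      (ν.prod (Measure.pi μ)) := by
  have h1 : Integrable (fun z : X i × (∀ j, X j) => f z.2) (ν.prod (Measure.pi μ)) :=
    hint.comp_snd ν
  have hm := hf.comp (measurable_update_prod (X := X) i)
  have h2 : Integrable (fun z : X i × (∀ j, X j) => f z.2 - f (Function.update z.2 i z.1))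
      (ν.prod (Measure.pi μ)) :=
    Integrable.of_bound (((hf.comp measurable_snd).sub hm).aestronglyMeasurable) C
      (.of_forall fun z => hosc z.2 z.1)
  refine (h1.sub h2).congr (.of_forall fun z => ?_)
  simp

/-- Disintegration along the `i`-th coordinate. -/
theorem integral_update {μ : ∀ i, Measure (X i)} (hμ : ∀ i, IsProbabilityMeasure (μ i))
    {f : (∀ i, X i) → ℝ} (hf : Measurable f) {C : ℝ} (i : Fin m)
    (hosc : ∀ (x : ∀ i, X i) (y : X i), |f x - f (Function.update x i y)| ≤ C)
    (hint : Integrable f (Measure.pi μ)) (ν : Measure (X i)) (hν : IsProbabilityMeasure ν) :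
    Integrable f (Measure.pi (Function.update μ i ν)) ∧
    Integrable (fun y => ∫ x, f (Function.update x i y) ∂Measure.pi μ) ν ∧
    ∫ x, f x ∂Measure.pi (Function.update μ i ν)
      = ∫ y, ∫ x, f (Function.update x i y) ∂Measure.pi μ ∂ν := by
  have := isProb_update hμ i hν
  have hi := integrable_update hf i hosc hint ν
  refine ⟨?_, hi.integral_prod_left, ?_⟩
  · rw [← map_update_prod]
    exact (integrable_map_measure hf.aestronglyMeasurable
      (measurable_update_prod i).aemeasurable).2 hi
  · rw [← map_update_prod, integral_map (measurable_update_prod i).aemeasurable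
      hf.aestronglyMeasurable, integral_prod _ hi]

/-- A probability measure carried by (at most) two points, presented as the image of a
probability measure on `Bool`. -/
def IsTwoPoint {Y : Type*} [MeasurableSpace Y] (ν : Measure Y) : Prop :=
  ∃ (φ : Bool → Y) (α : Measure Bool), IsProbabilityMeasure α ∧ ν = α.map φ

theorem exists_isTwoPoint {Y : Type*} [MeasurableSpace Y] [MeasurableSingletonClass Y]
    (y₀ y₁ : Y) {t : ℝ} (h0 : 0 ≤ t) (h1 : t ≤ 1) :
    ∃ ν : Measure Y, IsProbabilityMeasure ν ∧ IsTwoPoint ν ∧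
      ∀ g : Y → ℝ, ∫ y, g y ∂ν = (1 - t) * g y₀ + t * g y₁ := by
  set α : Measure Bool :=
    ENNReal.ofReal (1 - t) • Measure.dirac false + ENNReal.ofReal t • Measure.dirac true with hα
  have hp : IsProbabilityMeasure α := ⟨by
    simp [hα, ← ENNReal.ofReal_add (sub_nonneg.2 h1) h0]⟩
  set φ : Bool → Y := fun b => cond b y₁ y₀ with hφ
  have hm : Measurable φ := measurable_of_countable _
  have hmap : α.map φ
      = ENNReal.ofReal (1 - t) • Measure.dirac y₀ + ENNReal.ofReal t • Measure.dirac y₁ := by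
    rw [hα, Measure.map_add _ _ hm, Measure.map_smul, Measure.map_smul,
      Measure.map_dirac' hm, Measure.map_dirac' hm]
    rfl
  refine ⟨α.map φ, Measure.isProbabilityMeasure_map hm.aemeasurable, ⟨φ, α, hp, rfl⟩, fun g => ?_⟩
  have hd : ∀ y, Integrable g (Measure.dirac y) := fun y => integrable_dirac (by simp)
  rw [hmap, integral_add_measure ((hd _).smul_measure ENNReal.ofReal_ne_top)
    ((hd _).smul_measure ENNReal.ofReal_ne_top), integral_smul_measure, integral_smul_measure,
    integral_dirac, integral_dirac, ENNReal.toReal_ofReal (sub_nonneg.2 h1),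
    ENNReal.toReal_ofReal h0]
  simp

/-- A single factor of a product measure can be replaced by a two-point measure without
violating the mean constraint or lowering the probability of `{a ≤ f}`: with the other factors
fixed, both quantities are linear in that factor. -/
theorem exists_update_isTwoPoint [∀ i, MeasurableSingletonClass (X i)]
    {μ : ∀ i, Measure (X i)} (hμ : ∀ i, IsProbabilityMeasure (μ i))
    {f : (∀ i, X i) → ℝ} (hf : Measurable f) {C : ℝ} (a : ℝ) (i : Fin m)
    (hosc : ∀ (x : ∀ i, X i) (y : X i), |f x - f (Function.update x i y)| ≤ C)
    (hint : Integrable f (Measure.pi μ)) (hle : ∫ x, f x ∂Measure.pi μ ≤ 0) :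
    ∃ ν : Measure (X i), IsProbabilityMeasure ν ∧ IsTwoPoint ν ∧
      Integrable f (Measure.pi (Function.update μ i ν)) ∧
      ∫ x, f x ∂Measure.pi (Function.update μ i ν) ≤ 0 ∧
      Measure.pi μ {x | a ≤ f x} ≤ Measure.pi (Function.update μ i ν) {x | a ≤ f x} := by
  have hA : MeasurableSet {x | a ≤ f x} := measurableSet_le measurable_const hf
  set F : (∀ i, X i) → ℝ := {x | a ≤ f x}.indicator 1 with hF
  have hFm : Measurable F := measurable_one.indicator hA
  have hF01 : ∀ x, F x = 0 ∨ F x = 1 := fun x => by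
    by_cases h : x ∈ {x | a ≤ f x} <;> simp [hF, h]
  have hFosc : ∀ (x : ∀ i, X i) (y : X i), |F x - F (Function.update x i y)| ≤ 1 := by
    intro x y
    rcases hF01 x with h | h <;> rcases hF01 (Function.update x i y) with h' | h' <;>
      simp [h, h']
  have hFint : Integrable F (Measure.pi μ) :=
    Integrable.of_bound hFm.aestronglyMeasurable 1 (.of_forall fun x => by
      rcases hF01 x with h | h <;> simp [h])
  obtain ⟨-, hg, hge⟩ := integral_update hμ hf i hosc hint (μ i) (hμ i)
  obtain ⟨-, hp, hpe⟩ := integral_update hμ hFm i hFosc hFint (μ i) (hμ i)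
  rw [Function.update_eq_self] at hge hpe
  set V := ∫ x, F x ∂Measure.pi μ with hV
  obtain ⟨y₀, y₁, t, ht0, ht1, h1, h2⟩ := exists_two_point (μ i) hg
    (hp.sub (integrable_const V)) (hge ▸ hle) (by
      simp only [Pi.sub_apply]
      rw [integral_sub hp (integrable_const V), ← hpe]; simp)
  obtain ⟨ν, hν, hν2, hνi⟩ := exists_isTwoPoint y₀ y₁ ht0 ht1
  obtain ⟨hfi, -, hfe⟩ := integral_update hμ hf i hosc hint ν hν
  obtain ⟨-, -, hFe⟩ := integral_update hμ hFm i hFosc hFint ν hν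
  have := isProb_update hμ i hν
  refine ⟨ν, hν, hν2, hfi, ?_, ?_⟩
  · rw [hfe, hνi]; exact h1
  · rw [hνi] at hFe
    have h3 : V ≤ ∫ x, F x ∂Measure.pi (Function.update μ i ν) := by
      rw [hFe]; simp only [Pi.sub_apply] at h2; linarith
    rw [hV, hF, integral_indicator_one hA, integral_indicator_one hA] at h3
    exact (ENNReal.toReal_le_toReal (measure_ne_top _ _) (measure_ne_top _ _)).1 h3

theorem exists_isTwoPoint_pi [∀ i, MeasurableSingletonClass (X i)]
    {μ : ∀ i, Measure (X i)} (hμ : ∀ i, IsProbabilityMeasure (μ i))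
    {f : (∀ i, X i) → ℝ} (hf : Measurable f) {D : Fin m → ℝ} (a : ℝ)
    (hosc : ∀ (i : Fin m) (x : ∀ i, X i) (y : X i), |f x - f (Function.update x i y)| ≤ D i)
    (hint : Integrable f (Measure.pi μ)) (hle : ∫ x, f x ∂Measure.pi μ ≤ 0) :
    ∃ ν : ∀ i, Measure (X i), (∀ i, IsTwoPoint (ν i)) ∧
      ∫ x, f x ∂Measure.pi ν ≤ 0 ∧
      Measure.pi μ {x | a ≤ f x} ≤ Measure.pi ν {x | a ≤ f x} := by
  have key : ∀ S : Finset (Fin m), ∃ ν : ∀ i, Measure (X i),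
      (∀ i, IsProbabilityMeasure (ν i)) ∧ (∀ i ∈ S, IsTwoPoint (ν i)) ∧
      Integrable f (Measure.pi ν) ∧ ∫ x, f x ∂Measure.pi ν ≤ 0 ∧
      Measure.pi μ {x | a ≤ f x} ≤ Measure.pi ν {x | a ≤ f x} := by
    intro S
    induction S using Finset.induction_on with
    | empty => exact ⟨μ, hμ, by simp, hint, hle, le_rfl⟩
    | insert i S hi ih =>
      obtain ⟨ν, hν, h2, hI, hl, hv⟩ := ih
      obtain ⟨ρ, hρ, hρ2, hI', hl', hv'⟩ := exists_update_isTwoPoint hν hf a i (hosc i) hI hl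
      refine ⟨Function.update ν i ρ, isProb_update hν i hρ, fun j hj => ?_, hI', hl',
        hv.trans hv'⟩
      by_cases h : j = i
      · subst h; simpa using hρ2
      · simpa [h] using h2 j (Finset.mem_of_mem_insert_of_ne hj h)
  obtain ⟨ν, -, h2, -, hl, hv⟩ := key Finset.univ
  exact ⟨ν, fun i => h2 i (Finset.mem_univ i), hl, hv⟩

end Product

/-- **Reduction of the McDiarmid OUQ problem to the hypercube.** The supremum of
`μ {f ≥ a}` over measurable `f` on a product of Polish spaces (each with at least
two points) with componentwise oscillations `Osc_i(f) ≤ D_i`, and product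
probability measures `μ` with `E_μ[f] ≤ 0`, equals the corresponding supremum over
functions `h` on the hypercube `{0,1}^m` with the analogous oscillation bounds and
product probability measures `α` on `{0,1}^m` with `E_α[h] ≤ 0`. -/
theorem stmt6 {m : ℕ} (X : Fin m → Type*)
    [∀ i, TopologicalSpace (X i)] [∀ i, PolishSpace (X i)]
    [∀ i, MeasurableSpace (X i)] [∀ i, BorelSpace (X i)] [∀ i, Nontrivial (X i)]
    (D : Fin m → ℝ) (hD : ∀ i, 0 ≤ D i) (a : ℝ) :
    sSup {v : ℝ≥0∞ | ∃ (f : (∀ i, X i) → ℝ) (μ : ∀ i, Measure (X i)),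
        Measurable f ∧
        (∀ (i : Fin m) (x : ∀ i, X i) (y : X i),
          |f x - f (Function.update x i y)| ≤ D i) ∧
        (∀ i, IsProbabilityMeasure (μ i)) ∧
        Integrable f (Measure.pi μ) ∧ (∫ x, f x ∂Measure.pi μ) ≤ 0 ∧
        v = Measure.pi μ {x | a ≤ f x}} =
    sSup {v : ℝ≥0∞ | ∃ (h : (Fin m → Bool) → ℝ) (α : Fin m → Measure Bool),
        (∀ (k : Fin m) (s : Fin m → Bool) (b : Bool),
          |h s - h (Function.update s k b)| ≤ D k) ∧
        (∀ i, IsProbabilityMeasure (α i)) ∧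
        (∫ s, h s ∂Measure.pi α) ≤ 0 ∧
        v = Measure.pi α {s | a ≤ h s}} := by
  apply le_antisymm
  · refine sSup_le ?_
    rintro v ⟨f, μ, hf, hosc, hμ, hint, hle, rfl⟩
    obtain ⟨ν, h2, hl, hv⟩ := exists_isTwoPoint_pi hμ hf a hosc hint hle
    choose φ α hα hν using h2
    obtain rfl : ν = fun i => (α i).map (φ i) := funext hν
    have hm : ∀ i, Measurable (φ i) := fun i => measurable_of_countable _
    have hΦ : Measurable fun (s : Fin m → Bool) i => φ i (s i) := measurable_of_countable _
    have : ∀ i, IsProbabilityMeasure ((α i).map (φ i)) :=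
      fun i => Measure.isProbabilityMeasure_map (hm i).aemeasurable
    rw [← Measure.pi_map_pi fun i => (hm i).aemeasurable] at hl hv
    rw [integral_map hΦ.aemeasurable hf.aestronglyMeasurable] at hl
    rw [Measure.map_apply hΦ (measurableSet_le measurable_const hf)] at hv
    refine hv.trans (le_sSup ⟨fun s => f fun i => φ i (s i), α, fun k s b => ?_, hα, hl, rfl⟩)
    have e : (fun i => φ i (Function.update s k b i))
        = Function.update (fun i => φ i (s i)) k (φ k b) :=
      funext fun i => Function.apply_update (fun i => φ i) s k b i
    simpa only [e] using hosc k (fun i => φ i (s i)) (φ k b)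
  · classical
    refine sSup_le_sSup ?_
    rintro v ⟨h, α, hosc, hα, hle, rfl⟩
    choose x₀ x₁ hne using fun i => exists_pair_ne (X i)
    -- `ψ i` is a measurable left inverse of the embedding `φ i` of `Bool` into `X i`
    let φ : ∀ i, Bool → X i := fun i b => cond b (x₁ i) (x₀ i)
    let ψ : ∀ i, X i → Bool := fun i x => decide (x = x₁ i)
    have hψφ : ∀ i b, ψ i (φ i b) = b := by
      intro i b; cases b <;> simp [φ, ψ, hne i]
    have hφ : ∀ i, Measurable (φ i) := fun i => measurable_of_countable _
    have hψ : ∀ i, Measurable (ψ i) := fun i =>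
      measurable_to_bool (by
        have : ψ i ⁻¹' {true} = {x₁ i} := by ext x; simp [ψ]
        rw [this]; exact measurableSet_singleton _)
    have hΦ : Measurable fun (s : Fin m → Bool) i => φ i (s i) := measurable_of_countable _
    have hΨ : Measurable fun (x : ∀ i, X i) i => ψ i (x i) :=
      measurable_pi_lambda _ fun i => (hψ i).comp (measurable_pi_apply i)
    have hf : Measurable fun x : ∀ i, X i => h fun i => ψ i (x i) :=
      (measurable_of_countable h).comp hΨ
    have : ∀ i, IsProbabilityMeasure ((α i).map (φ i)) :=
      fun i => Measure.isProbabilityMeasure_map (hφ i).aemeasurable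
    refine ⟨fun x => h fun i => ψ i (x i), fun i => (α i).map (φ i), hf, fun i x y => ?_, this,
      ?_, ?_, ?_⟩
    · have e : (fun j => ψ j (Function.update x i y j))
          = Function.update (fun j => ψ j (x j)) i (ψ i y) :=
        funext fun j => Function.apply_update (fun j => ψ j) x i y j
      simpa only [e] using hosc i (fun j => ψ j (x j)) (ψ i y)
    · rw [← Measure.pi_map_pi fun i => (hφ i).aemeasurable,
        integrable_map_measure hf.aestronglyMeasurable hΦ.aemeasurable]
      exact Integrable.of_finite
    · rw [← Measure.pi_map_pi fun i => (hφ i).aemeasurable,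
        integral_map hΦ.aemeasurable hf.aestronglyMeasurable]
      simpa only [hψφ] using hle
    · rw [← Measure.pi_map_pi fun i => (hφ i).aemeasurable,
        Measure.map_apply hΦ (measurableSet_le measurable_const hf)]
      simp only [Set.preimage_ofPred_eq, hψφ]
end

section
/- Let m ∈ ℕ with m ≥ 1, let D₁, …, D_m ≥ 0 and a ∈ ℝ. Define U(A_D) as the supremum, over all pairs (h, α) where h : {0,1}^m → ℝ satisfies |h(s) − h(s')| ≤ D_k whenever s, s' differ only in coordinate k, α = α₁ ⊗ ⋯ ⊗ α_m is a product of probability measures on {0,1}^m, and E_α[h] ≤ 0, of α({s : h(s) ≥ a}). Define U(A_C) as the supremum, over all pairs (C, α) where C ⊆ {0,1}^m is nonempty, α is a product probability measure on {0,1}^m, and E_α[h^C] ≤ 0, of α({t : h^C(t) ≥ a}). Then U(A_D) = U(A_C). -/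
/-!
Restricting the supremum to the functions `h^C` does not change its value.

Each `h^C` is itself admissible: changing coordinate `k` of `t` changes the weighted Hamming
distance from `t` to `C` by at most `D k` (`abs_hC_sub_update_le`). Conversely, for an admissible
`h` whose superlevel set `C = {h ≥ a}` is nonempty, changing the coordinates on which `s ∈ C` and
`t` differ one at a time gives `h t ≥ h s - ∑_{s i ≠ t i} D i ≥ a - ∑_{s i ≠ t i} D i`, hence
`h^C ≤ h` (`hC_le`). So `E[h^C] ≤ E[h] ≤ 0`, while `h^C = a` on `C`, so `{h^C ≥ a}` contains
`{h ≥ a}`. If `{h ≥ a}` is empty, its measure is `0` and there is nothing to prove.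
-/

open MeasureTheory
open scoped ENNReal

/-- The product ("Bernoulli") probability measure on `{0,1}^m` determined by
`α ∈ [0,1]^m`, where `α i` is the probability that the `i`-th coordinate is `1`
(i.e. `true`). -/
noncomputable def berPi {m : ℕ} (α : Fin m → ℝ) : Measure (Fin m → Bool) :=
  Measure.pi fun i =>
    ENNReal.ofReal (α i) • Measure.dirac true +
      ENNReal.ofReal (1 - α i) • Measure.dirac false

/-- `hC a D C t = a - min_{s ∈ C} Σ_{i : s i ≠ t i} D i`, the function `h^C` of the
paper, for a nonempty `C ⊆ {0,1}^m`. -/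
noncomputable def hC {m : ℕ} (a : ℝ) (D : Fin m → ℝ) (C : Set (Fin m → Bool))
    (t : Fin m → Bool) : ℝ :=
  a - sInf ((fun s => ∑ i, if s i = t i then 0 else D i) '' C)

/-- Telescoping: bounded oscillation in each coordinate bounds the total variation by the
weighted Hamming distance. -/
lemma sub_le_sum_of_osc {m : ℕ} {D : Fin m → ℝ} {h : (Fin m → Bool) → ℝ}
    (hh : ∀ (k : Fin m) (s : Fin m → Bool) (b : Bool), |h s - h (Function.update s k b)| ≤ D k)
    (s t : Fin m → Bool) :
    h s - h t ≤ ∑ i, if s i = t i then 0 else D i := by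
  -- Replace the coordinates of `s` by those of `t` over a growing set `S` of coordinates.
  have key : ∀ S : Finset (Fin m),
      h s - h (S.piecewise t s) ≤ ∑ i ∈ S, if s i = t i then 0 else D i := by
    intro S
    induction S using Finset.induction_on with
    | empty => simp
    | insert k S hk ih =>
      rw [Finset.sum_insert hk, Finset.piecewise_insert]
      have hsk : S.piecewise t s k = s k := Finset.piecewise_eq_of_notMem _ _ _ hk
      split_ifs with he
      · have : Function.update (S.piecewise t s) k (t k) = S.piecewise t s := by
          rw [← he, ← hsk, Function.update_eq_self]
        rw [this]
        linarith
      · have := (abs_le.mp (hh k (S.piecewise t s) (t k))).2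
        linarith
  simpa using key Finset.univ

lemma hC_bddBelow {m : ℕ} (D : Fin m → ℝ) (C : Set (Fin m → Bool)) (t : Fin m → Bool) :
    BddBelow ((fun s => ∑ i, if s i = t i then 0 else D i) '' C) :=
  (Set.toFinite _).bddBelow

lemma abs_hC_sub_update_le {m : ℕ} {D : Fin m → ℝ} (hD : ∀ i, 0 ≤ D i) (a : ℝ)
    {C : Set (Fin m → Bool)} (hC0 : C.Nonempty) (k : Fin m) (t : Fin m → Bool) (b : Bool) :
    |hC a D C t - hC a D C (Function.update t k b)| ≤ D k := by
  -- Triangle inequality for the weighted Hamming distance.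
  have tri : ∀ s t t' : Fin m → Bool, (∀ i, i ≠ k → t i = t' i) →
      (∑ i, if s i = t i then 0 else D i) ≤ (∑ i, if s i = t' i then 0 else D i) + D k := by
    intro s t t' htt
    have : D k = ∑ i, if i = k then D i else 0 := by simp
    rw [this, ← Finset.sum_add_distrib]
    refine Finset.sum_le_sum fun i _ => ?_
    have := hD i
    by_cases hik : i = k
    · split_ifs <;> linarith
    · rw [htt i hik]
      simp [hik]
  have inf_le : ∀ t t' : Fin m → Bool, (∀ i, i ≠ k → t i = t' i) →
      hC a D C t' ≤ hC a D C t + D k := by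
    intro t t' htt
    have : sInf ((fun s => ∑ i, if s i = t i then 0 else D i) '' C) - D k ≤
        sInf ((fun s => ∑ i, if s i = t' i then 0 else D i) '' C) := by
      refine le_csInf (hC0.image _) ?_
      rintro _ ⟨s, hs, rfl⟩
      have h1 := csInf_le (hC_bddBelow D C t) ⟨s, hs, rfl⟩
      have h2 := tri s t t' htt
      simp only at h1 ⊢
      linarith
    unfold hC
    linarith
  have hu : ∀ i, i ≠ k → t i = Function.update t k b i := fun i hi => by simp [hi]
  have h1 := inf_le t _ hu
  have h2 := inf_le _ t fun i hi => (hu i hi).symm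
  rw [abs_le]
  constructor <;> linarith

/-- `h^C` is the smallest function of bounded oscillation that is at least `a` on `C`. -/
lemma hC_le {m : ℕ} {D : Fin m → ℝ} {a : ℝ} {h : (Fin m → Bool) → ℝ}
    (hh : ∀ (k : Fin m) (s : Fin m → Bool) (b : Bool), |h s - h (Function.update s k b)| ≤ D k)
    {C : Set (Fin m → Bool)} (hC0 : C.Nonempty) (hCa : ∀ s ∈ C, a ≤ h s) (t : Fin m → Bool) :
    hC a D C t ≤ h t := by
  have : a - h t ≤ sInf ((fun s => ∑ i, if s i = t i then 0 else D i) '' C) := by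
    refine le_csInf (hC0.image _) ?_
    rintro _ ⟨s, hs, rfl⟩
    have h1 := sub_le_sum_of_osc hh s t
    have h2 := hCa s hs
    simp only
    linarith
  unfold hC
  linarith

lemma le_hC_of_mem {m : ℕ} (D : Fin m → ℝ) (a : ℝ) {C : Set (Fin m → Bool)}
    {t : Fin m → Bool} (ht : t ∈ C) : a ≤ hC a D C t := by
  have := csInf_le (hC_bddBelow D C t) ⟨t, ht, rfl⟩
  simp only [if_true, Finset.sum_const_zero] at this
  unfold hC
  linarith

lemma isProbabilityMeasure_ber {p : ℝ} (hp : p ∈ Set.Icc (0 : ℝ) 1) :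
    IsProbabilityMeasure (ENNReal.ofReal p • Measure.dirac true +
      ENNReal.ofReal (1 - p) • Measure.dirac false : Measure Bool) := by
  constructor
  simp [← ENNReal.ofReal_add hp.1 (sub_nonneg.mpr hp.2)]

/-- Every probability measure on `{0,1}` is Bernoulli. -/
lemma eq_ber (μ : Measure Bool) [IsProbabilityMeasure μ] :
    μ = ENNReal.ofReal (μ.real {true}) • Measure.dirac true +
      ENNReal.ofReal (1 - μ.real {true}) • Measure.dirac false := by
  have hc : 1 - μ.real {true} = μ.real {false} := by
    rw [← probReal_compl_eq_one_sub (MeasurableSet.singleton true)]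
    congr 1
    ext b
    cases b <;> simp
  rw [hc]
  refine Measure.ext_of_singleton fun b => ?_
  cases b <;> simp

lemma berPi_real {m : ℕ} (α : Fin m → Measure Bool) (hα : ∀ i, IsProbabilityMeasure (α i)) :
    berPi (fun i => (α i).real {true}) = Measure.pi α := by
  unfold berPi
  congr 1
  funext i
  exact (eq_ber (α i)).symm

/-- **Reduction of the hypercube McDiarmid problem to the functions `h^C`.**
The supremum of `α {h ≥ a}` over functions `h` on `{0,1}^m` with oscillation in
direction `k` bounded by `D k` and product probability measures `α` with
`E_α[h] ≤ 0`, equals the supremum of `α {h^C ≥ a}` over nonempty subsets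
`C ⊆ {0,1}^m` and product probability measures `α` (parameterized by
`α ∈ [0,1]^m`) with `E_α[h^C] ≤ 0`. -/
theorem stmt7 {m : ℕ} (hm : 1 ≤ m) (D : Fin m → ℝ) (hD : ∀ i, 0 ≤ D i) (a : ℝ) :
    sSup {v : ℝ≥0∞ | ∃ (h : (Fin m → Bool) → ℝ) (α : Fin m → Measure Bool),
        (∀ (k : Fin m) (s : Fin m → Bool) (b : Bool),
          |h s - h (Function.update s k b)| ≤ D k) ∧
        (∀ i, IsProbabilityMeasure (α i)) ∧
        (∫ s, h s ∂Measure.pi α) ≤ 0 ∧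
        v = Measure.pi α {s | a ≤ h s}} =
    sSup {v : ℝ≥0∞ | ∃ (C : Set (Fin m → Bool)) (α : Fin m → ℝ),
        C.Nonempty ∧ (∀ i, α i ∈ Set.Icc (0 : ℝ) 1) ∧
        (∫ t, hC a D C t ∂berPi α) ≤ 0 ∧
        v = berPi α {t | a ≤ hC a D C t}} := by
  apply le_antisymm
  · refine sSup_le ?_
    rintro v ⟨h, α, hh, hα, hint, rfl⟩
    rcases Set.eq_empty_or_nonempty {s | a ≤ h s} with he | hne
    · simp [he]
    · have hle : ∀ t, hC a D {s | a ≤ h s} t ≤ h t := hC_le hh hne fun s hs => hs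
      refine le_sSup_of_le ⟨{s | a ≤ h s}, fun i => (α i).real {true}, hne,
        fun i => ⟨measureReal_nonneg, measureReal_le_one⟩, ?_, rfl⟩ ?_
      · rw [berPi_real α hα]
        exact (integral_mono .of_finite .of_finite hle).trans hint
      · rw [berPi_real α hα]
        exact measure_mono fun s hs => le_hC_of_mem D a hs
  · refine sSup_le ?_
    rintro v ⟨C, α, hC0, hα, hint, rfl⟩
    exact le_sSup ⟨hC a D C, _, fun k s b => abs_hC_sub_update_le hD a hC0 k s b,
      fun i => isProbabilityMeasure_ber (hα i), hint, rfl⟩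
end

section
/- Let X₁ be a nonempty Polish space containing at least two points, with its Borel σ-algebra, let D₁ > 0 and a ≥ 0. Define U(A_McD) as the supremum, over all pairs (f, μ) where f : X₁ → ℝ is measurable with sup_{x,x' ∈ X₁} |f(x) − f(x')| ≤ D₁, μ is a Borel probability measure on X₁, and E_μ[f] ≤ 0, of μ({x : f(x) ≥ a}). Then U(A_McD) = 0 if D₁ ≤ a, and U(A_McD) = 1 − a/D₁ if 0 ≤ a ≤ D₁. -/
/-!
Both cases say that the supremum is `ENNReal.ofReal (1 - a / D₁)`, which vanishes when `D₁ ≤ a`.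

* Upper bound (`measure_le_of_oscillation`): if `f x₀ ≥ a` for some `x₀`, the oscillation bound
  gives `f ≥ a - D₁` everywhere, so `g = f - (a - D₁)` is nonnegative with `E[g] ≤ D₁ - a`.
  Markov's inequality at level `D₁` yields `μ {f ≥ a} = μ {g ≥ D₁} ≤ 1 - a / D₁`.
* Attainment for `a ≤ D₁` (`exists_two_point_extremizer`): put mass `1 - a / D₁` at a point where
  `f = a` and mass `a / D₁` at another, where `f = a - D₁`; the mean is then exactly `0`.
-/

open MeasureTheory
open scoped ENNReal

theorem measure_le_of_oscillation {X : Type*} [MeasurableSpace X] {D a : ℝ} (hD : 0 < D)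
    {f : X → ℝ} {μ : Measure X} [IsProbabilityMeasure μ]
    (hosc : ∀ x x' : X, |f x - f x'| ≤ D) (hint : Integrable f μ) (hmean : ∫ x, f x ∂μ ≤ 0) :
    μ {x | a ≤ f x} ≤ ENNReal.ofReal (1 - a / D) := by
  rcases Set.eq_empty_or_nonempty {x | a ≤ f x} with h | ⟨x₀, hx₀⟩
  · simp [h]
  have hx₀' : a ≤ f x₀ := hx₀
  have hg : ∀ x, 0 ≤ f x - (a - D) := fun x => by
    have := (abs_le.1 (hosc x₀ x)).2
    linarith
  have hmarkov := mul_meas_ge_le_integral_of_nonneg (μ := μ)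
    (Filter.Eventually.of_forall hg) (hint.sub (integrable_const (a - D))) D
  have hset : {x | D ≤ f x - (a - D)} = {x | a ≤ f x} := by
    ext x
    simp only [Set.mem_ofPred_eq]
    constructor <;> intro h <;> linarith
  rw [integral_sub hint (integrable_const _), hset] at hmarkov
  simp only [integral_const, probReal_univ, one_smul] at hmarkov
  rw [← ofReal_measureReal]
  apply ENNReal.ofReal_le_ofReal
  have : μ.real {x | a ≤ f x} * D ≤ D - a := by
    rw [mul_comm]
    linarith
  rw [one_sub_div hD.ne', le_div_iff₀ hD]
  exact this

theorem exists_two_point_extremizer {X : Type*} [MeasurableSpace X] [MeasurableSingletonClass X]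
    [Nontrivial X] {D a : ℝ} (hD : 0 < D) (ha : 0 ≤ a) (haD : a ≤ D) :
    ∃ (f : X → ℝ) (μ : Measure X),
      Measurable f ∧ (∀ x x' : X, |f x - f x'| ≤ D) ∧ IsProbabilityMeasure μ ∧
      Integrable f μ ∧ (∫ x, f x ∂μ) ≤ 0 ∧ ENNReal.ofReal (1 - a / D) = μ {x | a ≤ f x} := by
  classical
  obtain ⟨y, z, hyz⟩ := exists_pair_ne X
  have hq : 0 ≤ a / D := by positivity
  have hp : 0 ≤ 1 - a / D := by
    have := (div_le_one hD).2 haD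
    linarith
  set f : X → ℝ := fun x => if x = y then a else a - D with hf
  have hfm : Measurable f :=
    Measurable.ite (measurableSet_singleton y) measurable_const measurable_const
  have hfy : f y = a := by simp [hf]
  have hfz : f z = a - D := by simp [hf, hyz.symm]
  have hi : ∀ (w : X) (p : ℝ),
      Integrable f (ENNReal.ofReal p • Measure.dirac w) := fun w p =>
    (integrable_dirac (by simp)).smul_measure ENNReal.ofReal_ne_top
  refine ⟨f, ENNReal.ofReal (1 - a / D) • Measure.dirac y + ENNReal.ofReal (a / D) •
    Measure.dirac z, hfm, fun x x' => ?_, ⟨?_⟩, (hi _ _).add_measure (hi _ _), ?_, ?_⟩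
  · simp only [hf]
    split_ifs <;> simp [abs_of_pos hD, hD.le]
  · simp [← ENNReal.ofReal_add hp hq]
  · rw [integral_add_measure (hi _ _) (hi _ _), integral_smul_measure, integral_smul_measure,
      integral_dirac, integral_dirac, ENNReal.toReal_ofReal hp, ENNReal.toReal_ofReal hq, hfy, hfz]
    apply le_of_eq
    simp only [smul_eq_mul]
    field_simp
    ring
  · have hS : MeasurableSet {x | a ≤ f x} := measurableSet_le measurable_const hfm
    simp [Measure.dirac_apply' _ hS, Set.indicator, hfy, hfz, hD.not_ge]

/-- **Optimal McDiarmid inequality in dimension `m = 1`.** For a Polish space `X`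
with at least two points, `D₁ > 0` and `a ≥ 0`, the supremum of `μ {f ≥ a}` over
measurable `f : X → ℝ` with oscillation at most `D₁` and Borel probability
measures `μ` with `E_μ[f] ≤ 0` equals `0` if `D₁ ≤ a`, and `1 − a/D₁` if
`0 ≤ a ≤ D₁`. -/
theorem stmt8 {X : Type*} [TopologicalSpace X] [PolishSpace X]
    [MeasurableSpace X] [BorelSpace X] [Nontrivial X]
    (D₁ a : ℝ) (hD₁ : 0 < D₁) (ha : 0 ≤ a) :
    ∀ U : ℝ≥0∞,
      U = sSup {v : ℝ≥0∞ | ∃ (f : X → ℝ) (μ : Measure X),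
        Measurable f ∧ (∀ x x' : X, |f x - f x'| ≤ D₁) ∧
        IsProbabilityMeasure μ ∧
        Integrable f μ ∧ (∫ x, f x ∂μ) ≤ 0 ∧
        v = μ {x | a ≤ f x}} →
      (D₁ ≤ a → U = 0) ∧ (a ≤ D₁ → U = ENNReal.ofReal (1 - a / D₁)) := by
  rintro U rfl
  have hub : ∀ v ∈ {v : ℝ≥0∞ | ∃ (f : X → ℝ) (μ : Measure X),
      Measurable f ∧ (∀ x x' : X, |f x - f x'| ≤ D₁) ∧ IsProbabilityMeasure μ ∧
      Integrable f μ ∧ (∫ x, f x ∂μ) ≤ 0 ∧ v = μ {x | a ≤ f x}},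
      v ≤ ENNReal.ofReal (1 - a / D₁) := by
    rintro v ⟨f, μ, -, hosc, hμ, hint, hmean, rfl⟩
    exact measure_le_of_oscillation hD₁ hosc hint hmean
  refine ⟨fun h => ?_, fun h => le_antisymm (sSup_le hub) (le_sSup ?_)⟩
  · rw [← nonpos_iff_eq_zero]
    refine (sSup_le hub).trans_eq (ENNReal.ofReal_of_nonpos ?_)
    have := (one_le_div hD₁).2 h
    linarith
  · exact exists_two_point_extremizer hD₁ ha h
end

section
/- Let X₁, X₂ be nonempty Polish spaces, each containing at least two points, with their Borel σ-algebras, let D₁, D₂ > 0 and a ≥ 0. Define U(A_McD) as the supremum, over all pairs (f, μ) where f : X₁ × X₂ → ℝ is measurable with Osc_i(f) ≤ D_i for i = 1, 2, μ = μ₁ ⊗ μ₂ is a product of Borel probability measures, and E_μ[f] ≤ 0, of μ({x : f(x) ≥ a}). Then U(A_McD) = 0 if D₁ + D₂ ≤ a; U(A_McD) = (D₁ + D₂ − a)²/(4 D₁ D₂) if |D₁ − D₂| ≤ a ≤ D₁ + D₂; and U(A_McD) = 1 − a/max(D₁, D₂) if 0 ≤ a ≤ |D₁ − D₂|. -/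
/-!
Both bounds reduce to one two-variable problem: maximise `p * q` over `p, q ∈ [0, 1]` subject to
`D₁ p + D₂ q ≤ D₁ + D₂ - a`.

*Every such `p * q` is reached* (`exists_admissible`). Take `A ⊆ X₁`, `B ⊆ X₂` of masses `p`, `q`,
for measures supported on two points, and let `f` be `a`, lowered by `D₁` off `A` and by `D₂`
off `B`.

*Nothing else is reached* (`exists_weights`). Let `E = {f ≥ a}` have mass `e > 0`, and let `A`, `B`
be the sets of points over which `E` has a section of positive measure, with masses `p`, `q`.
Almost all of `E` lies in `A × B`. A point in `A × B` outside `E` differs from a point of `E` in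
either single coordinate, so `f ≥ a - min D₁ D₂` there, and off `A × B` the function loses at most
`D₁` for leaving `A` plus `D₂` for leaving `B`. Integrating,
`a ≤ D₁ (1 - p) + D₂ (1 - q) + min D₁ D₂ (p q - e)` (`mean_bound`). Shrinking the weight belonging
to the larger `D_i` until `p q = e` preserves this inequality (`shrink_weights`).

The two-variable problem is then solved by AM-GM when `|D₁ - D₂| ≤ a`, and by putting the weight
of the smaller `D_i` equal to `1` when `a ≤ |D₁ - D₂|` (`weights_le`). When `D₁ + D₂ ≤ a` no pair
of positive weights is feasible.
-/

open MeasureTheory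
open scoped ENNReal

theorem shrink_weights {D₁ D₂ a p q e : ℝ} (hD₁ : 0 < D₁) (hD₂ : 0 < D₂)
    (hp1 : p ≤ 1) (hq1 : q ≤ 1) (hp0 : 0 ≤ p) (hq0 : 0 ≤ q) (he : 0 < e) (hpq : e ≤ p * q)
    (h : a ≤ D₁ * (1 - p) + D₂ * (1 - q) + min D₁ D₂ * (p * q - e)) :
    ∃ p' q' : ℝ, 0 < p' ∧ p' ≤ 1 ∧ 0 < q' ∧ q' ≤ 1 ∧ e = p' * q' ∧
      D₁ * p' + D₂ * q' ≤ D₁ + D₂ - a := by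
  have hp : 0 < p := by
    rcases hp0.eq_or_lt with h0 | h0
    · rw [← h0] at hpq; linarith
    · exact h0
  have hq : 0 < q := by
    rcases hq0.eq_or_lt with h0 | h0
    · rw [← h0] at hpq; linarith
    · exact h0
  rcases le_total D₁ D₂ with hD | hD
  · rw [min_eq_left hD] at h
    obtain ⟨r, hr⟩ : ∃ r, r = e / p := ⟨_, rfl⟩
    have hre : e = p * r := by rw [hr]; field_simp
    have hr0 : 0 < r := hr ▸ div_pos he hp
    have hrq : r ≤ q := by rw [hr, div_le_iff₀ hp]; linarith
    refine ⟨p, r, hp, hp1, hr0, hrq.trans hq1, hre, ?_⟩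
    subst hre
    have h1 : D₁ * p ≤ D₂ := by nlinarith
    nlinarith [mul_le_mul_of_nonneg_right h1 (sub_nonneg.2 hrq)]
  · rw [min_eq_right hD] at h
    obtain ⟨r, hr⟩ : ∃ r, r = e / q := ⟨_, rfl⟩
    have hre : e = r * q := by rw [hr]; field_simp
    have hr0 : 0 < r := hr ▸ div_pos he hq
    have hrp : r ≤ p := by rw [hr, div_le_iff₀ hq]; linarith
    refine ⟨r, q, hr0, hrp.trans hp1, hq, hq1, hre, ?_⟩
    subst hre
    have h1 : D₂ * q ≤ D₁ := by nlinarith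
    nlinarith [mul_le_mul_of_nonneg_right h1 (sub_nonneg.2 hrp)]

/-- With `D₂` the smaller range and `a ≤ D₁ - D₂`, the product is maximal at `q = 1`. -/
theorem weights_le {D₁ D₂ a p q : ℝ} (hD₁ : 0 < D₁) (hD₂ : 0 < D₂) (hq0 : 0 < q) (hq1 : q ≤ 1)
    (h : D₁ * p + D₂ * q ≤ D₁ + D₂ - a) (ha : a ≤ D₁ - D₂) : p * q ≤ 1 - a / D₁ := by
  have h1 : 1 - a / D₁ = (D₁ - a) / D₁ := by field_simp
  rw [h1, le_div_iff₀ hD₁]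
  -- `D₁ - a - p * q * D₁` is at least `(1 - q) * (D₁ - a - D₂ * q)`
  have h2 : 0 ≤ (1 - q) * (D₁ - a - D₂ * q) :=
    mul_nonneg (by linarith) (by nlinarith)
  nlinarith [mul_le_mul_of_nonneg_right h hq0.le]

theorem exists_prob_set {X : Type*} [MeasurableSpace X] [MeasurableSingletonClass X] [Nontrivial X]
    {p : ℝ} (hp0 : 0 ≤ p) (hp1 : p ≤ 1) :
    ∃ (μ : Measure X) (A : Set X), IsProbabilityMeasure μ ∧ MeasurableSet A ∧ μ.real A = p := by
  obtain ⟨x, y, hxy⟩ := exists_pair_ne X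
  refine ⟨ENNReal.ofReal p • Measure.dirac x + ENNReal.ofReal (1 - p) • Measure.dirac y, {x},
    ⟨?_⟩, measurableSet_singleton x, ?_⟩
  · simp [← ENNReal.ofReal_add hp0 (sub_nonneg.2 hp1)]
  · simp [Measure.real, hxy.symm, hp0]

/-- The integral of `a - D₁ 1_{Aᶜ} - D₂ 1_{Bᶜ} - m (1_{A × B} - 1_E)`, written without complements. -/
theorem integral_step {X₁ X₂ : Type*} [MeasurableSpace X₁] [MeasurableSpace X₂]
    (μ₁ : Measure X₁) (μ₂ : Measure X₂) [IsProbabilityMeasure μ₁] [IsProbabilityMeasure μ₂]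
    (D₁ D₂ a m : ℝ) {A : Set X₁} {B : Set X₂} {E : Set (X₁ × X₂)}
    (hA : MeasurableSet A) (hB : MeasurableSet B) (hE : MeasurableSet E) :
    let g : X₁ × X₂ → ℝ := fun x =>
      (a - D₁ - D₂) + D₁ * (A ×ˢ Set.univ).indicator 1 x + D₂ * (Set.univ ×ˢ B).indicator 1 x
        - m * ((A ×ˢ B).indicator 1 x - E.indicator 1 x)
    Integrable g (μ₁.prod μ₂) ∧
    ∫ x, g x ∂(μ₁.prod μ₂) = (a - D₁ - D₂) + D₁ * μ₁.real A + D₂ * μ₂.real B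
      - m * (μ₁.real A * μ₂.real B - (μ₁.prod μ₂).real E) := by
  have key : ∀ {S : Set (X₁ × X₂)}, MeasurableSet S →
      Integrable (S.indicator (1 : X₁ × X₂ → ℝ)) (μ₁.prod μ₂) := fun hS =>
    (integrable_const (1 : ℝ)).indicator hS
  have h1 := key (hA.prod (MeasurableSet.univ (α := X₂)))
  have h2 := key ((MeasurableSet.univ (α := X₁)).prod hB)
  have h3 := key (hA.prod hB)
  have h4 := key hE
  have i0 : Integrable (fun _ : X₁ × X₂ => a - D₁ - D₂) (μ₁.prod μ₂) := integrable_const _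
  have i1 := i0.add (h1.const_mul D₁)
  have i2 := i1.add (h2.const_mul D₂)
  have i3 := (h3.sub h4).const_mul m
  refine ⟨i2.sub i3, ?_⟩
  have e3 := integral_sub i2 i3
  have e2 := integral_add i1 (h2.const_mul D₂)
  have e1 := integral_add i0 (h1.const_mul D₁)
  have e4 := integral_sub h3 h4
  simp only [Pi.add_apply, Pi.sub_apply] at e1 e2 e3 e4
  rw [e3, e2, e1, integral_const_mul, integral_const_mul, integral_const_mul, e4,
    integral_indicator_one (hA.prod .univ), integral_indicator_one (.prod .univ hB),
    integral_indicator_one (hA.prod hB), integral_indicator_one hE]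
  simp [measureReal_prod_prod]

theorem exists_admissible {X₁ X₂ : Type*} [MeasurableSpace X₁] [MeasurableSingletonClass X₁]
    [Nontrivial X₁] [MeasurableSpace X₂] [MeasurableSingletonClass X₂] [Nontrivial X₂]
    {D₁ D₂ a p q : ℝ} (hD₁ : 0 < D₁) (hD₂ : 0 < D₂) (hp0 : 0 ≤ p) (hp1 : p ≤ 1)
    (hq0 : 0 ≤ q) (hq1 : q ≤ 1) (h : D₁ * p + D₂ * q ≤ D₁ + D₂ - a) :
    ∃ (f : X₁ × X₂ → ℝ) (μ₁ : Measure X₁) (μ₂ : Measure X₂),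
        Measurable f ∧
        (∀ (x₁ x₁' : X₁) (x₂ : X₂), |f (x₁, x₂) - f (x₁', x₂)| ≤ D₁) ∧
        (∀ (x₁ : X₁) (x₂ x₂' : X₂), |f (x₁, x₂) - f (x₁, x₂')| ≤ D₂) ∧
        IsProbabilityMeasure μ₁ ∧ IsProbabilityMeasure μ₂ ∧
        Integrable f (μ₁.prod μ₂) ∧ (∫ x, f x ∂μ₁.prod μ₂) ≤ 0 ∧
        ENNReal.ofReal (p * q) ≤ (μ₁.prod μ₂) {x | a ≤ f x} := by
  obtain ⟨μ₁, A, hμ₁, hA, hpA⟩ := exists_prob_set (X := X₁) hp0 hp1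
  obtain ⟨μ₂, B, hμ₂, hB, hqB⟩ := exists_prob_set (X := X₂) hq0 hq1
  obtain ⟨hi, hint⟩ := integral_step μ₁ μ₂ D₁ D₂ a 0 hA hB MeasurableSet.empty
  simp only [zero_mul, sub_zero] at hi hint
  refine ⟨_, μ₁, μ₂, ?_, ?_, ?_, hμ₁, hμ₂, hi, ?_, ?_⟩
  · have m1 : Measurable ((A ×ˢ Set.univ).indicator (1 : X₁ × X₂ → ℝ)) :=
      measurable_one.indicator (hA.prod .univ)
    have m2 : Measurable ((Set.univ ×ˢ B).indicator (1 : X₁ × X₂ → ℝ)) :=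
      measurable_one.indicator (.prod .univ hB)
    fun_prop
  · intro x x' y
    by_cases h1 : x ∈ A <;> by_cases h2 : x' ∈ A <;> by_cases h3 : y ∈ B <;>
      simp only [Set.indicator, Set.mem_prod, Set.mem_univ, and_true, true_and, h1, h2, h3, if_true,
        if_false, Pi.one_apply] <;>
      rw [abs_le] <;> constructor <;> linarith
  · intro x y y'
    by_cases h1 : y ∈ B <;> by_cases h2 : y' ∈ B <;> by_cases h3 : x ∈ A <;>
      simp only [Set.indicator, Set.mem_prod, Set.mem_univ, and_true, true_and, h1, h2, h3, if_true,
        if_false, Pi.one_apply] <;>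
      rw [abs_le] <;> constructor <;> linarith
  · rw [hint, hpA, hqB]; linarith
  · calc ENNReal.ofReal (p * q) = (μ₁.prod μ₂) (A ×ˢ B) := by
          rw [← hpA, ← hqB, ← measureReal_prod_prod, ofReal_measureReal]
      _ ≤ _ := measure_mono (by
          rintro ⟨x, y⟩ ⟨hx, hy⟩
          have hx' : x ∈ A := hx
          have hy' : y ∈ B := hy
          simp [Set.indicator, hx', hy']
          linarith)

/-- The weights `p` and `q` are the masses of the sets of points over which `E = {f ≥ a}` has a
section of positive measure. These sets replace the two projections of `E`, which need not be measurable. -/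
theorem mean_bound {X₁ X₂ : Type*} [MeasurableSpace X₁] [MeasurableSpace X₂]
    {D₁ D₂ a : ℝ} {f : X₁ × X₂ → ℝ} {μ₁ : Measure X₁} {μ₂ : Measure X₂}
    [IsProbabilityMeasure μ₁] [IsProbabilityMeasure μ₂] (hf : Measurable f)
    (h₁ : ∀ (x₁ x₁' : X₁) (x₂ : X₂), |f (x₁, x₂) - f (x₁', x₂)| ≤ D₁)
    (h₂ : ∀ (x₁ : X₁) (x₂ x₂' : X₂), |f (x₁, x₂) - f (x₁, x₂')| ≤ D₂)
    (hi : Integrable f (μ₁.prod μ₂)) (hint : (∫ x, f x ∂μ₁.prod μ₂) ≤ 0)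
    (he : 0 < (μ₁.prod μ₂).real {x | a ≤ f x}) :
    ∃ p q : ℝ, 0 ≤ p ∧ p ≤ 1 ∧ 0 ≤ q ∧ q ≤ 1 ∧ (μ₁.prod μ₂).real {x | a ≤ f x} ≤ p * q ∧
      a ≤ D₁ * (1 - p) + D₂ * (1 - q)
        + min D₁ D₂ * (p * q - (μ₁.prod μ₂).real {x | a ≤ f x}) := by
  set E : Set (X₁ × X₂) := {x | a ≤ f x} with hEdef
  have hE : MeasurableSet E := measurableSet_le measurable_const hf
  have hA : MeasurableSet {x | μ₂ (Prod.mk x ⁻¹' E) ≠ 0} :=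
    (measurable_measure_prodMk_left hE) (measurableSet_singleton 0).compl
  have hB : MeasurableSet {y | μ₁ ((fun x => (x, y)) ⁻¹' E) ≠ 0} :=
    (measurable_measure_prodMk_right hE) (measurableSet_singleton 0).compl
  set A := {x | μ₂ (Prod.mk x ⁻¹' E) ≠ 0} with hAdef
  set B := {y | μ₁ ((fun x => (x, y)) ⁻¹' E) ≠ 0} with hBdef
  have hEne : E.Nonempty := by
    by_contra hne
    rw [Set.not_nonempty_iff_eq_empty] at hne
    simp [hne] at he
  have nA : (μ₁.prod μ₂) (E ∩ Aᶜ ×ˢ Set.univ) = 0 := by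
    rw [Measure.measure_prod_null (hE.inter (hA.compl.prod .univ))]
    refine Filter.Eventually.of_forall fun x => ?_
    by_cases hx : μ₂ (Prod.mk x ⁻¹' E) = 0
    · exact measure_mono_null (Set.preimage_mono Set.inter_subset_left) hx
    · have : Prod.mk x ⁻¹' (E ∩ Aᶜ ×ˢ Set.univ) = ∅ := by
        ext y; simp [hAdef, hx]
      simp [this]
  have nB : (μ₁.prod μ₂) (E ∩ Set.univ ×ˢ Bᶜ) = 0 := by
    rw [Measure.prod_apply_symm (hE.inter (MeasurableSet.univ.prod hB.compl))]
    refine lintegral_eq_zero_of_ae_eq_zero (Filter.Eventually.of_forall fun y => ?_)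
    by_cases hy : μ₁ ((fun x => (x, y)) ⁻¹' E) = 0
    · exact measure_mono_null (Set.preimage_mono Set.inter_subset_left) hy
    · have : (fun x => (x, y)) ⁻¹' (E ∩ Set.univ ×ˢ Bᶜ) = ∅ := by
        ext x; simp [hBdef, hy]
      simp [this]
  have hsub : ∀ᵐ x ∂(μ₁.prod μ₂), x ∈ E → x ∈ A ×ˢ B := by
    filter_upwards [measure_eq_zero_iff_ae_notMem.1 nA, measure_eq_zero_iff_ae_notMem.1 nB]
      with x hxA hxB hx
    constructor
    · by_contra hc; exact hxA ⟨hx, hc, trivial⟩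
    · by_contra hc; exact hxB ⟨hx, trivial, hc⟩
  have ptA : ∀ x y, x ∈ A → a - D₂ ≤ f (x, y) := by
    intro x y hx
    obtain ⟨y', hy'⟩ := nonempty_of_measure_ne_zero hx
    have hy'' : a ≤ f (x, y') := hy'
    linarith [(abs_le.1 (h₂ x y y')).1]
  have ptB : ∀ x y, y ∈ B → a - D₁ ≤ f (x, y) := by
    intro x y hy
    obtain ⟨x', hx'⟩ := nonempty_of_measure_ne_zero hy
    have hx'' : a ≤ f (x', y) := hx'
    linarith [(abs_le.1 (h₁ x x' y)).1]
  have pt : ∀ x y, a - D₁ - D₂ ≤ f (x, y) := by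
    intro x y
    obtain ⟨⟨x', y'⟩, hx'⟩ := hEne
    have hx'' : a ≤ f (x', y') := hx'
    linarith [(abs_le.1 (h₁ x x' y)).1, (abs_le.1 (h₂ x' y y')).1]
  obtain ⟨gi, gint⟩ := integral_step μ₁ μ₂ D₁ D₂ a (min D₁ D₂) hA hB hE
  have hmono := integral_mono_ae gi hi (by
    filter_upwards [hsub] with ⟨x, y⟩ hxy
    by_cases hxE : (x, y) ∈ E
    · obtain ⟨hx, hy⟩ := hxy hxE
      have hx' : x ∈ A := hx
      have hy' : y ∈ B := hy
      have : a ≤ f (x, y) := hxE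
      simp [Set.indicator, hx', hy', hxE]
      linarith
    · by_cases hx : x ∈ A <;> by_cases hy : y ∈ B
      · simp only [Set.indicator, Set.mem_prod, hx, hy, hxE, Set.mem_univ, and_self, if_true,
          if_false, Pi.one_apply]
        rcases min_choice D₁ D₂ with hm | hm <;> rw [hm]
        · linarith [ptB x y hy]
        · linarith [ptA x y hx]
      · have := ptA x y hx
        simp [Set.indicator, hx, hy, hxE]
        linarith
      · have := ptB x y hy
        simp [Set.indicator, hx, hy, hxE]
        linarith
      · simpa [Set.indicator, hx, hy, hxE] using pt x y)
  rw [gint] at hmono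
  refine ⟨μ₁.real A, μ₂.real B, measureReal_nonneg, measureReal_le_one, measureReal_nonneg,
    measureReal_le_one, ?_, by linarith⟩
  rw [← measureReal_prod_prod]
  exact ENNReal.toReal_mono (measure_ne_top _ _) (measure_mono_ae hsub)

theorem exists_weights {X₁ X₂ : Type*} [MeasurableSpace X₁] [MeasurableSpace X₂]
    {D₁ D₂ a : ℝ} (hD₁ : 0 < D₁) (hD₂ : 0 < D₂)
    {f : X₁ × X₂ → ℝ} {μ₁ : Measure X₁} {μ₂ : Measure X₂}
    [IsProbabilityMeasure μ₁] [IsProbabilityMeasure μ₂] (hf : Measurable f)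
    (h₁ : ∀ (x₁ x₁' : X₁) (x₂ : X₂), |f (x₁, x₂) - f (x₁', x₂)| ≤ D₁)
    (h₂ : ∀ (x₁ : X₁) (x₂ x₂' : X₂), |f (x₁, x₂) - f (x₁, x₂')| ≤ D₂)
    (hi : Integrable f (μ₁.prod μ₂)) (hint : (∫ x, f x ∂μ₁.prod μ₂) ≤ 0) :
    (μ₁.prod μ₂) {x | a ≤ f x} = 0 ∨
    ∃ p q : ℝ, 0 < p ∧ p ≤ 1 ∧ 0 < q ∧ q ≤ 1 ∧
      (μ₁.prod μ₂) {x | a ≤ f x} = ENNReal.ofReal (p * q) ∧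
      D₁ * p + D₂ * q ≤ D₁ + D₂ - a := by
  rcases (measureReal_nonneg (μ := μ₁.prod μ₂) (s := {x | a ≤ f x})).eq_or_lt with h0 | h0
  · left
    exact (measureReal_eq_zero_iff).1 h0.symm
  · right
    obtain ⟨p, q, hp0, hp1, hq0, hq1, hle, hb⟩ := mean_bound hf h₁ h₂ hi hint h0
    obtain ⟨p', q', h1, h2, h3, h4, h5, h6⟩ :=
      shrink_weights hD₁ hD₂ hp1 hq1 hp0 hq0 h0 hle hb
    exact ⟨p', q', h1, h2, h3, h4, by rw [← h5, ofReal_measureReal], h6⟩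

/-- **Optimal McDiarmid inequality in dimension `m = 2`.** For Polish spaces `X₁, X₂`
with at least two points each, `D₁, D₂ > 0` and `a ≥ 0`, the supremum of
`μ {f ≥ a}` over measurable `f : X₁ × X₂ → ℝ` with componentwise oscillations
`Osc_i(f) ≤ D_i` and product probability measures `μ = μ₁ ⊗ μ₂` with `E_μ[f] ≤ 0`
is `0` if `D₁ + D₂ ≤ a`; `(D₁ + D₂ − a)²/(4 D₁ D₂)` if `|D₁ − D₂| ≤ a ≤ D₁ + D₂`;
and `1 − a / max(D₁, D₂)` if `0 ≤ a ≤ |D₁ − D₂|`. -/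
theorem stmt9 {X₁ X₂ : Type*}
    [TopologicalSpace X₁] [PolishSpace X₁] [MeasurableSpace X₁] [BorelSpace X₁]
    [Nontrivial X₁]
    [TopologicalSpace X₂] [PolishSpace X₂] [MeasurableSpace X₂] [BorelSpace X₂]
    [Nontrivial X₂]
    (D₁ D₂ a : ℝ) (hD₁ : 0 < D₁) (hD₂ : 0 < D₂) (ha : 0 ≤ a) :
    ∀ U : ℝ≥0∞,
      U = sSup {v : ℝ≥0∞ | ∃ (f : X₁ × X₂ → ℝ) (μ₁ : Measure X₁) (μ₂ : Measure X₂),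
        Measurable f ∧
        (∀ (x₁ x₁' : X₁) (x₂ : X₂), |f (x₁, x₂) - f (x₁', x₂)| ≤ D₁) ∧
        (∀ (x₁ : X₁) (x₂ x₂' : X₂), |f (x₁, x₂) - f (x₁, x₂')| ≤ D₂) ∧
        IsProbabilityMeasure μ₁ ∧ IsProbabilityMeasure μ₂ ∧
        Integrable f (μ₁.prod μ₂) ∧ (∫ x, f x ∂μ₁.prod μ₂) ≤ 0 ∧
        v = (μ₁.prod μ₂) {x | a ≤ f x}} →
      (D₁ + D₂ ≤ a → U = 0) ∧
      (|D₁ - D₂| ≤ a → a ≤ D₁ + D₂ →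
        U = ENNReal.ofReal ((D₁ + D₂ - a) ^ 2 / (4 * D₁ * D₂))) ∧
      (a ≤ |D₁ - D₂| → U = ENNReal.ofReal (1 - a / max D₁ D₂)) := by
  intro U hU
  have upper : ∀ C : ℝ≥0∞, (∀ p q : ℝ, 0 < p → p ≤ 1 → 0 < q → q ≤ 1 →
      D₁ * p + D₂ * q ≤ D₁ + D₂ - a → ENNReal.ofReal (p * q) ≤ C) → U ≤ C := by
    intro C hC
    rw [hU]
    refine sSup_le ?_
    rintro v ⟨f, μ₁, μ₂, hf, h₁, h₂, hμ₁, hμ₂, hi, hint, rfl⟩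
    rcases exists_weights (a := a) hD₁ hD₂ hf h₁ h₂ hi hint with h | ⟨p, q, h1, h2, h3, h4, h5, h6⟩
    · rw [h]; exact zero_le
    · rw [h5]; exact hC p q h1 h2 h3 h4 h6
  have lower : ∀ p q : ℝ, 0 ≤ p → p ≤ 1 → 0 ≤ q → q ≤ 1 →
      D₁ * p + D₂ * q ≤ D₁ + D₂ - a → ENNReal.ofReal (p * q) ≤ U := by
    intro p q hp0 hp1 hq0 hq1 h
    obtain ⟨f, μ₁, μ₂, hf, h₁, h₂, hμ₁, hμ₂, hi, hint, hv⟩ :=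
      exists_admissible (X₁ := X₁) (X₂ := X₂) hD₁ hD₂ hp0 hp1 hq0 hq1 h
    rw [hU]
    exact hv.trans (le_sSup ⟨f, μ₁, μ₂, hf, h₁, h₂, hμ₁, hμ₂, hi, hint, rfl⟩)
  refine ⟨fun h => ?_, fun h h' => ?_, fun h => ?_⟩
  · refine le_antisymm (upper 0 ?_) zero_le
    intro p q hp _ hq _ hc
    linarith [mul_pos hD₁ hp, mul_pos hD₂ hq]
  · obtain ⟨hl, hr⟩ := abs_le.1 h
    apply le_antisymm
    · refine upper _ fun p q hp _ hq _ hc => ENNReal.ofReal_le_ofReal ?_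
      rw [le_div_iff₀ (by positivity)]
      have h1 : (D₁ * p + D₂ * q) ^ 2 ≤ (D₁ + D₂ - a) ^ 2 :=
        pow_le_pow_left₀ (by positivity) hc 2
      nlinarith [sq_nonneg (D₁ * p - D₂ * q)]
    ·
      -- equality in AM-GM: `D₁ * p = D₂ * q`
      have h1 := lower ((D₁ + D₂ - a) / (2 * D₁)) ((D₁ + D₂ - a) / (2 * D₂))
        (div_nonneg (by linarith) (by linarith)) (by rw [div_le_one (by linarith)]; linarith)
        (div_nonneg (by linarith) (by linarith)) (by rw [div_le_one (by linarith)]; linarith)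
        (le_of_eq (by field_simp; ring))
      have h2 : (D₁ + D₂ - a) ^ 2 / (4 * D₁ * D₂)
          = (D₁ + D₂ - a) / (2 * D₁) * ((D₁ + D₂ - a) / (2 * D₂)) := by
        rw [div_mul_div_comm]
        congr 1 <;> ring
      rwa [h2]
  · rcases le_total D₁ D₂ with hD | hD
    · rw [max_eq_right hD]
      rw [abs_of_nonpos (by linarith)] at h
      apply le_antisymm
      · refine upper _ fun p q hp hp1 hq _ hc => ENNReal.ofReal_le_ofReal ?_
        rw [mul_comm]
        exact weights_le hD₂ hD₁ hp hp1 (by linarith) (by linarith)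
      · have h1 : a / D₂ ≤ 1 := by rw [div_le_one hD₂]; linarith
        have h2 : D₂ * (a / D₂) = a := by field_simp
        simpa using lower 1 (1 - a / D₂) zero_le_one le_rfl (by linarith)
          (by linarith [div_nonneg ha hD₂.le]) (by nlinarith)
    · rw [max_eq_left hD]
      rw [abs_of_nonneg (by linarith)] at h
      apply le_antisymm
      · refine upper _ fun p q hp _ hq hq1 hc => ENNReal.ofReal_le_ofReal ?_
        exact weights_le hD₁ hD₂ hq hq1 hc h
      · have h1 : a / D₁ ≤ 1 := by rw [div_le_one hD₁]; linarith
        have h2 : D₁ * (a / D₁) = a := by field_simp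
        simpa using lower (1 - a / D₁) 1 (by linarith)
          (by linarith [div_nonneg ha hD₁.le]) zero_le_one le_rfl (by nlinarith)
end
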